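/- arXiv:1609.04195 — 2 statements merged into one kernel-verified Lean document; each statement's English description precedes it below -/
import Mathlib

section
/- Let 0 ≤ δ ≤ 9/16 and let A be an n×n complex Hermitian matrix with 0 ⪯ A ⪯ I whose diagonal entries all satisfy A_{ii} ≤ δ. Then there exists a partition X₁ ⊔ X₂ ⊔ X₃ ⊔ X₄ = {1,…,n} into four pairwise disjoint sets such that the largest eigenvalue of P_{X₁}AP_{X₁} + P_{X₂}AP_{X₂} + P_{X₃}AP_{X₃} + P_{X₄}AP_{X₄} is at most (1/16)·(√(7(1−δ)) + 3√δ)², where P_X denotes the diagonal 0-1 projection matrix onto the coordinates in X. In particular, for a projection P with diagonal entries at most 1/2, this bound equals (3+√7)²/32 ≈ 0.996. -/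
open Polynomial Matrix
open scoped ComplexOrder

/-- The diagonal 0-1 projection matrix onto the coordinates in `X`. -/
def proj {n : ℕ} (X : Finset (Fin n)) : Matrix (Fin n) (Fin n) ℂ :=
  Matrix.diagonal fun i => if i ∈ X then 1 else 0

/-
A coloring `c` of the indices with `r` colors picks one row `(i, c i)` from each block `{i} × [r]`
of `A ⊗ 1`, and the principal submatrix of `A ⊗ 1` on these rows is the pinching of `A` along `c`.
Its characteristic polynomial is the restriction to the diagonal of the mixed derivative of
`F y = det (diag y - A ⊗ 1)` in all the other variables, where `F` is multiaffine and real stable.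
Summing these derivatives over the choices in a block preserves stability, and the summands have a
common interlacing, so block by block some choice has its largest root below that of the sum.

The roots of the sum are controlled by a barrier: above `b > 1` the logarithmic derivatives of `F`
are at most `Φ = (1 - δ) / b + δ / (b - 1)`. Along a block the polynomial is real-rooted, and the
inequality between the arithmetic and harmonic means of its roots shows that summing over the block
keeps `Φ` while lowering the corner to `b - d`, where `r ^ 2 * Φ * d = (r - 1) ^ 2`. The estimate is
the minimum of `b - d` over `b`.
-/

section ProperPosition

open Lagrange
open scoped ComplexConjugate

/-- `g` is in proper position with respect to `f`: the quotient `g / f` maps the upper half-plane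
into the closed lower half-plane. The product with the conjugate replaces the quotient, so that
zeros of `f` need no separate treatment. -/
def InProperPosition (g f : ℝ[X]) : Prop :=
  ∀ z : ℂ, 0 < z.im → (aeval z g * conj (aeval z f)).im ≤ 0

lemma exists_im_pos_pow_eq_exp {m : ℕ} {θ : ℝ} (hθ : 0 < θ) (hθm : θ < m * Real.pi) :
    ∃ ω : ℂ, 0 < ω.im ∧ ω ^ m = Complex.exp (θ * Complex.I) := by
  have hm : (0 : ℝ) < m := pos_of_mul_pos_left (hθ.trans hθm) Real.pi_pos.le
  refine ⟨Complex.exp ((θ / m : ℝ) * Complex.I), ?_, ?_⟩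
  · rw [Complex.exp_ofReal_mul_I_im]
    exact Real.sin_pos_of_pos_of_lt_pi (by positivity) (by rwa [div_lt_iff₀' hm])
  · rw [← Complex.exp_nat_mul, ← mul_assoc]
    have : (m : ℂ) ≠ 0 := by exact_mod_cast hm.ne'
    congr 2
    push_cast
    field_simp

namespace InProperPosition

variable {g f : ℝ[X]} {a : ℝ} {m : ℕ}

lemma mul_im_pow_nonneg (h : InProperPosition g ((X - C a) ^ m * f)) {ω : ℂ} (hω : 0 < ω.im) :
    0 ≤ g.eval a * f.eval a * (ω ^ m).im := by
  let φ : ℝ → ℝ := fun ε =>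
    (aeval (a + ε * ω : ℂ) g * conj (aeval (a + ε * ω : ℂ) f) * conj (ω ^ m)).im
  have hφ : Continuous φ := by
    have haeval (p : ℝ[X]) : Continuous fun ε : ℝ => aeval (a + ε * ω : ℂ) p :=
      p.continuous_aeval.comp (by fun_prop)
    have := haeval g
    have := haeval f
    fun_prop
  have hφ_nonpos : ∀ ε > 0, φ ε ≤ 0 := by
    intro ε hε
    have hz : 0 < (a + ε * ω : ℂ).im := by simpa using mul_pos hε hω
    have hfactor : aeval (a + ε * ω : ℂ) g * conj (aeval (a + ε * ω : ℂ) ((X - C a) ^ m * f))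
        = ((ε ^ m : ℝ) : ℂ) *
          (aeval (a + ε * ω : ℂ) g * conj (aeval (a + ε * ω : ℂ) f) * conj (ω ^ m)) := by
      simp only [map_mul, map_pow, map_sub, aeval_X, aeval_C, Complex.coe_algebraMap,
        add_sub_cancel_left, mul_pow, Complex.conj_ofReal, Complex.ofReal_pow]
      ring
    have := h _ hz
    rw [hfactor, Complex.im_ofReal_mul] at this
    exact nonpos_of_mul_nonpos_right this (pow_pos hε m)
  have hφ0 : φ 0 ≤ 0 :=
    le_of_tendsto (hφ.continuousWithinAt (s := Set.Ioi 0))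
      (eventually_mem_nhdsWithin.mono hφ_nonpos)
  have haeval (p : ℝ[X]) : aeval (a : ℂ) p = (p.eval a : ℝ) :=
    aeval_algebraMap_apply_eq_algebraMap_eval a p
  have hφ0_eq : φ 0 = -(g.eval a * f.eval a * (ω ^ m).im) := by
    simp only [φ, Complex.ofReal_zero, zero_mul, add_zero, haeval, Complex.conj_ofReal]
    rw [← Complex.ofReal_mul, Complex.im_ofReal_mul, Complex.conj_im, mul_neg]
  linarith

lemma multiplicity_eq_one_and_eval_mul_pos (h : InProperPosition g ((X - C a) ^ m * f))
    (hm : m ≠ 0) (hg : g.eval a ≠ 0) (hf : f.eval a ≠ 0) :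
    m = 1 ∧ 0 < g.eval a * f.eval a := by
  have hm1 : (1 : ℝ) ≤ m := by exact_mod_cast Nat.one_le_iff_ne_zero.2 hm
  have hpos : 0 < g.eval a * f.eval a := by
    obtain ⟨ω, hω, hωm⟩ := exists_im_pos_pow_eq_exp (m := m) (θ := Real.pi / 2)
      (by positivity) (by nlinarith [Real.pi_pos])
    have := h.mul_im_pow_nonneg hω
    rw [hωm, Complex.exp_ofReal_mul_I_im, Real.sin_pi_div_two, mul_one] at this
    exact this.lt_of_ne' (mul_ne_zero hg hf)
  refine ⟨?_, hpos⟩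
  -- at a multiple root the argument of `ω ^ m` can reach `3π/2`, where the sign is wrong
  by_contra hne
  have hm2 : (2 : ℝ) ≤ m := by exact_mod_cast (by omega : 2 ≤ m)
  obtain ⟨ω, hω, hωm⟩ := exists_im_pos_pow_eq_exp (m := m) (θ := Real.pi / 2 + Real.pi)
    (by positivity) (by nlinarith [Real.pi_pos])
  have := h.mul_im_pow_nonneg hω
  rw [hωm, Complex.exp_ofReal_mul_I_im, Real.sin_add_pi, Real.sin_pi_div_two] at this
  linarith

lemma of_mul_X_sub_C (h : InProperPosition ((X - C a) * g) ((X - C a) * f)) :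
    InProperPosition g f := by
  intro z hz
  have hza : z - a ≠ 0 := by
    intro h0
    simpa [hz.ne'] using congrArg Complex.im h0
  have hfactor : aeval z ((X - C a) * g) * conj (aeval z ((X - C a) * f))
      = (Complex.normSq (z - a) : ℝ) * (aeval z g * conj (aeval z f)) := by
    simp only [map_mul, map_sub, aeval_X, aeval_C, Complex.coe_algebraMap,
      Complex.normSq_eq_conj_mul_self]
    ring
  have := h z hz
  rw [hfactor, Complex.im_ofReal_mul] at this
  exact nonpos_of_mul_nonpos_right this (Complex.normSq_pos.2 hza)

variable {ι : Type*} [DecidableEq ι] {s : Finset ι} {a : ι → ℝ}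

lemma eval_mul_eval_nodal_erase_pos (h : InProperPosition g (nodal s a))
    (hg : ∀ i ∈ s, g.eval (a i) ≠ 0) {i : ι} (hi : i ∈ s) :
    0 < g.eval (a i) * (nodal (s.erase i) a).eval (a i) := by
  obtain ⟨q, hq, hdvd⟩ :=
    exists_eq_pow_rootMultiplicity_mul_and_not_dvd (nodal s a) nodal_ne_zero (a i)
  have hqi : q.eval (a i) ≠ 0 := fun h0 => hdvd (dvd_iff_isRoot.2 h0)
  have hmult : rootMultiplicity (a i) (nodal s a) ≠ 0 :=
    (rootMultiplicity_pos nodal_ne_zero).2 (eval_nodal_at_node hi) |>.ne'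
  rw [hq] at h
  obtain ⟨hone, hpos⟩ := h.multiplicity_eq_one_and_eval_mul_pos hmult (hg i hi) hqi
  have : nodal (s.erase i) a = q := by
    rw [hone, pow_one, nodal_eq_mul_nodal_erase hi] at hq
    exact mul_left_cancel₀ (X_sub_C_ne_zero _) hq
  rwa [this]

lemma exists_partialFractions_of_no_common_root (h : InProperPosition g (nodal s a))
    (hdeg : g.natDegree ≤ s.card) (hg : ∀ i ∈ s, g.eval (a i) ≠ 0) :
    ∃ (r : ℝ) (m : ι → ℝ), (∀ i ∈ s, 0 ≤ m i) ∧
      g = C r * nodal s a + ∑ i ∈ s, C (m i) * nodal (s.erase i) a := by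
  have hpos := fun i hi => h.eval_mul_eval_nodal_erase_pos hg (i := i) hi
  have hinj : Set.InjOn a s := by
    intro i hi j hj hij
    by_contra hne
    have := eval_nodal_at_node (v := a) (Finset.mem_erase.2 ⟨Ne.symm hne, hj⟩)
    have h0 := hpos i hi
    rw [hij, this, mul_zero] at h0
    exact h0.false
  set r := g.coeff s.card
  have hlt : (g - C r * nodal s a).degree < s.card := by
    rw [degree_lt_iff_coeff_zero]
    intro k hk
    rcases hk.eq_or_lt with rfl | hk
    · have : (nodal s a).coeff s.card = 1 := by
        simpa [natDegree_nodal] using (nodal_monic (s := s) (v := a)).coeff_natDegree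
      rw [coeff_sub, coeff_C_mul, this, mul_one, sub_self]
    · rw [coeff_sub, coeff_C_mul, coeff_eq_zero_of_natDegree_lt (hdeg.trans_lt hk),
        coeff_eq_zero_of_natDegree_lt (by rwa [natDegree_nodal]), mul_zero, sub_zero]
  refine ⟨r, fun i => nodalWeight s a i * g.eval (a i), fun i hi => ?_, ?_⟩
  · have := (hpos i hi).le
    simp only [nodalWeight_eq_eval_nodal_erase_inv, mul_nonneg_iff, inv_nonneg,
      inv_nonpos] at this ⊢
    tauto
  · rw [← sub_eq_iff_eq_add', eq_interpolate hinj hlt, interpolate_apply]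
    refine Finset.sum_congr rfl fun i hi => ?_
    rw [basis_eq_prod_sub_inv_mul_nodal_div hi, ← nodal_erase_eq_nodal_div hi, ← mul_assoc, ← C_mul,
      eval_sub, eval_mul, eval_nodal_at_node hi, mul_zero, sub_zero, mul_comm (g.eval _)]

lemma exists_partialFractions (h : InProperPosition g (nodal s a)) (hdeg : g.natDegree ≤ s.card) :
    ∃ (r : ℝ) (m : ι → ℝ), (∀ i ∈ s, 0 ≤ m i) ∧
      g = C r * nodal s a + ∑ i ∈ s, C (m i) * nodal (s.erase i) a := by
  induction s using Finset.strongInduction generalizing g with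
  | H s ih =>
  by_cases hcommon : ∀ i ∈ s, g.eval (a i) ≠ 0
  · exact h.exists_partialFractions_of_no_common_root hdeg hcommon
  push Not at hcommon
  obtain ⟨i, hi, hgi⟩ := hcommon
  obtain ⟨q, rfl⟩ := dvd_iff_isRoot.2 hgi
  rw [nodal_eq_mul_nodal_erase hi] at h
  have hq : q.natDegree ≤ (s.erase i).card := by
    rcases eq_or_ne q 0 with rfl | hq0
    · simp
    · rw [natDegree_mul (X_sub_C_ne_zero _) hq0, natDegree_X_sub_C] at hdeg
      rw [Finset.card_erase_of_mem hi]
      omega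
  obtain ⟨r, m, hm, hqeq⟩ := ih _ (Finset.erase_ssubset hi) h.of_mul_X_sub_C hq
  refine ⟨r, Function.update m i 0, fun j hj => ?_, ?_⟩
  · rcases eq_or_ne j i with rfl | hji
    · simp
    · simpa [hji] using hm j (Finset.mem_erase.2 ⟨hji, hj⟩)
  · rw [← Finset.add_sum_erase _ _ hi, Function.update_self, C_0, zero_mul, zero_add,
      nodal_eq_mul_nodal_erase hi]
    conv_lhs => rw [hqeq]
    rw [mul_add, Finset.mul_sum, mul_left_comm]
    congr 1
    refine Finset.sum_congr rfl fun j hj => ?_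
    have hji : j ≠ i := Finset.ne_of_mem_erase hj
    rw [Function.update_of_ne hji, Finset.erase_right_comm, mul_left_comm,
      nodal_eq_mul_nodal_erase (s := s.erase j) (Finset.mem_erase.2 ⟨hji.symm, hi⟩)]

end InProperPosition

end ProperPosition

section RealRooted

open Lagrange
open scoped ComplexConjugate

lemma splits_of_aeval_ne_zero {f : ℝ[X]} (hf : ∀ z : ℂ, 0 < z.im → aeval z f ≠ 0) : f.Splits := by
  refine Splits.of_splits_map (algebraMap ℝ ℂ) (IsAlgClosed.splits _) fun z hz => ?_
  have hz0 : aeval z f = 0 := by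
    rw [aeval_def, ← eval_map]
    exact isRoot_of_mem_roots hz
  have hz_im : z.im = 0 := by
    rcases lt_trichotomy z.im 0 with hneg | hzero | hpos
    · refine absurd ?_ (hf (conj z) (by simpa using hneg))
      rw [aeval_conj, hz0, map_zero]
    · exact hzero
    · exact absurd hz0 (hf z hpos)
  exact ⟨z.re, Complex.ext rfl (by simpa using hz_im.symm)⟩

lemma eq_C_mul_nodal_roots {f : ℝ[X]} (hf : f.Splits) :
    f = C f.leadingCoeff * nodal Finset.univ fun x : f.roots.ToType => x.1 := by
  have := congrArg (fun r : Multiset ℝ => (r.map fun x => X - C x).prod)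
    (Multiset.map_univ_coe f.roots)
  simp only [Multiset.map_map, Finset.prod_map_val, Function.comp_apply] at this
  rw [nodal_eq, this]
  exact hf.eq_prod_roots

lemma neg_of_mem_roots {f : ℝ[X]} (hf : ∀ k, 0 ≤ f.coeff k) (hf0 : 0 < f.coeff 0) {x : ℝ}
    (hx : x ∈ f.roots) : x < 0 := by
  by_contra! hx0
  have hroot : f.eval x = 0 := isRoot_of_mem_roots hx
  rw [eval_eq_sum_range, Finset.sum_range_succ'] at hroot
  have := Finset.sum_nonneg fun k (_ : k ∈ Finset.range f.natDegree) =>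
    mul_nonneg (hf (k + 1)) (pow_nonneg hx0 (k + 1))
  simp only [pow_zero, mul_one] at hroot
  linarith

variable {ι : Type*} {s : Finset ι} {u : ι → ℝ}

lemma nodal_neg_coeff_zero : (nodal s (-u)).coeff 0 = ∏ i ∈ s, u i := by
  simp [coeff_zero_eq_eval_zero, eval_nodal]

lemma nodal_coeff_card : (nodal s u).coeff s.card = 1 := by
  simpa using (nodal_monic (s := s) (v := u)).coeff_natDegree

lemma nodal_neg_coeff_card_sub_one (hs : s.Nonempty) :
    (nodal s (-u)).coeff (s.card - 1) = ∑ i ∈ s, u i := by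
  rw [nodal_eq, prod_X_sub_C_coeff_card_pred s (-u) hs.card_pos]
  simp

lemma nodal_neg_coeff_one (hu : ∀ i ∈ s, 0 < u i) :
    (nodal s (-u)).coeff 1 = (∏ i ∈ s, u i) * ∑ i ∈ s, (u i)⁻¹ := by
  classical
  have : (nodal s (-u)).coeff 1 = (derivative (nodal s (-u))).coeff 0 := by simp [coeff_derivative]
  rw [this, derivative_nodal, finsetSum_coeff, Finset.mul_sum]
  refine Finset.sum_congr rfl fun i hi => ?_
  rw [nodal_neg_coeff_zero, ← Finset.mul_prod_erase _ _ hi, mul_right_comm,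
    mul_inv_cancel₀ (hu i hi).ne', one_mul]

variable [DecidableEq ι]

/- The arithmetic–harmonic mean inequality for the nodes other than `i`. -/
lemma le_sum_erase_of_sum_inv_le {Φ D : ℝ} (hu : ∀ i ∈ s, 0 < u i)
    (hinv : ∑ i ∈ s, (u i)⁻¹ ≤ Φ) (hD : Φ * D = (s.card - 1) ^ 2) {i : ι} (hi : i ∈ s) :
    D ≤ ∑ j ∈ s.erase i, u j := by
  have hΦ : 0 < Φ := (Finset.sum_pos (fun _ hj => inv_pos.2 (hu _ hj)) ⟨i, hi⟩).trans_le hinv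
  have hu' : ∀ j ∈ s.erase i, 0 < u j := fun j hj => hu j (Finset.mem_of_mem_erase hj)
  have hsum : 0 ≤ ∑ j ∈ s.erase i, u j := Finset.sum_nonneg fun j hj => (hu' j hj).le
  have hcard : ∑ _j ∈ s.erase i, (1 : ℝ) = s.card - 1 := by
    rw [Finset.sum_const, Finset.card_erase_of_mem hi, nsmul_one,
      Nat.cast_pred (Finset.card_pos.2 ⟨i, hi⟩)]
  have hinv' : ∑ j ∈ s.erase i, (u j)⁻¹ ≤ Φ :=
    (Finset.sum_le_sum_of_subset_of_nonneg (Finset.erase_subset i s)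
      fun _ hj _ => (inv_pos.2 (hu _ hj)).le).trans hinv
  refine le_of_mul_le_mul_left (hD.trans_le ?_) hΦ
  calc ((s.card : ℝ) - 1) ^ 2
      ≤ (∑ j ∈ s.erase i, (u j)⁻¹) * ∑ j ∈ s.erase i, u j := by
        rw [← hcard]
        exact Finset.sum_sq_le_sum_mul_sum_of_sq_le_mul _ (fun j hj => (inv_pos.2 (hu' j hj)).le)
          (fun j hj => (hu' j hj).le) fun j hj => by rw [inv_mul_cancel₀ (hu' j hj).ne', one_pow]
    _ ≤ Φ * ∑ j ∈ s.erase i, u j := mul_le_mul_of_nonneg_right hinv' hsum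

lemma InProperPosition.coeff_card_sub_one_sub_le {g : ℝ[X]} {Φ D : ℝ}
    (h : InProperPosition g (nodal s (-u))) (hs : s.Nonempty) (hu : ∀ i ∈ s, 0 < u i)
    (hdeg : g.natDegree ≤ s.card) (hg : g.coeff 0 ≤ Φ * ∏ i ∈ s, u i)
    (hD : ∀ i ∈ s, D ≤ ∑ j ∈ s.erase i, u j) :
    g.coeff (s.card - 1) - D * g.coeff s.card ≤ Φ * (∑ i ∈ s, u i - D) := by
  obtain ⟨r, m, hm, rfl⟩ := h.exists_partialFractions hdeg
  have hcard : s.card - 1 < s.card := Nat.pred_lt hs.card_pos.ne'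
  have hu_le : ∀ i ∈ s, u i ≤ ∑ j ∈ s, u j - D := fun i hi => by
    have := hD i hi
    rw [Finset.sum_erase_eq_sub hi] at this
    linarith
  have hW : 0 ≤ ∑ j ∈ s, u j - D := hs.elim fun i hi => (hu i hi).le.trans (hu_le i hi)
  have htop : ∑ i ∈ s, m i * (nodal (s.erase i) (-u)).coeff s.card = 0 :=
    Finset.sum_eq_zero fun i hi => by
      rw [coeff_eq_zero_of_natDegree_lt, mul_zero]
      rwa [natDegree_nodal, Finset.card_erase_of_mem hi]
  have hsub : ∑ i ∈ s, m i * (nodal (s.erase i) (-u)).coeff (s.card - 1) = ∑ i ∈ s, m i :=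
    Finset.sum_congr rfl fun i hi => by
      rw [← Finset.card_erase_of_mem hi, nodal_coeff_card, mul_one]
  have hΦ : r + ∑ i ∈ s, m i / u i ≤ Φ := by
    refine le_of_mul_le_mul_right ?_ (Finset.prod_pos hu)
    refine Eq.trans_le ?_ hg
    simp only [coeff_add, coeff_C_mul, finsetSum_coeff, nodal_neg_coeff_zero, add_mul,
      Finset.sum_mul]
    congr 1
    refine Finset.sum_congr rfl fun i hi => ?_
    rw [← Finset.mul_prod_erase _ _ hi, ← mul_assoc, div_mul_cancel₀ _ (hu i hi).ne']
  calc _ = r * (∑ i ∈ s, u i - D) + ∑ i ∈ s, m i := by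
        simp only [coeff_add, coeff_C_mul, finsetSum_coeff, nodal_neg_coeff_card_sub_one hs,
          nodal_coeff_card, htop, hsub]
        ring
    _ ≤ r * (∑ i ∈ s, u i - D) + ∑ i ∈ s, m i / u i * (∑ i ∈ s, u i - D) := by
        gcongr with i hi
        rw [div_mul_eq_mul_div, le_div_iff₀ (hu i hi)]
        exact mul_le_mul_of_nonneg_left (hu_le i hi) (hm i hi)
    _ = (r + ∑ i ∈ s, m i / u i) * (∑ i ∈ s, u i - D) := by rw [add_mul, Finset.sum_mul]
    _ ≤ Φ * (∑ i ∈ s, u i - D) := mul_le_mul_of_nonneg_right hΦ hW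

lemma exists_eq_C_mul_nodal_neg {f : ℝ[X]} {n : ℕ} (hf : ∀ z : ℂ, 0 < z.im → aeval z f ≠ 0)
    (hcoeff : ∀ k, 0 ≤ f.coeff k) (hf0 : 0 < f.coeff 0) (hn : f.natDegree = n) :
    ∃ (c : ℝ) (u : Fin n → ℝ), 0 < c ∧ (∀ i, 0 < u i) ∧ f = C c * nodal Finset.univ (-u) := by
  have hsplits := splits_of_aeval_ne_zero hf
  have hlead : 0 < f.leadingCoeff :=
    (hcoeff _).lt_of_ne' (leadingCoeff_ne_zero.2 fun h => by simp [h] at hf0)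
  let e : Fin n ≃ f.roots.ToType :=
    (Fintype.equivFinOfCardEq
      (by rw [Multiset.card_coe, ← hsplits.natDegree_eq_card_roots, hn])).symm
  refine ⟨f.leadingCoeff, fun i => -(e i).1, hlead, fun i => ?_, ?_⟩
  · exact neg_pos.2 (neg_of_mem_roots hcoeff hf0 Multiset.coe_mem)
  · conv_lhs => rw [eq_C_mul_nodal_roots hsplits, nodal_eq, ← e.prod_comp]
    simp [nodal_eq]

section Barrier

variable {f : ℝ[X]} {Ψ D : ℝ} {n : ℕ}

lemma exists_eq_C_mul_nodal_neg_of_coeff_one_le (hf : ∀ z : ℂ, 0 < z.im → aeval z f ≠ 0)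
    (hcoeff : ∀ k, 0 ≤ f.coeff k) (hf0 : 0 < f.coeff 0) (hn : f.natDegree = n)
    (hf1 : f.coeff 1 ≤ Ψ * f.coeff 0) (hD : Ψ * D = (n - 1) ^ 2) :
    ∃ (c : ℝ) (u : Fin n → ℝ), 0 < c ∧ (∀ i, 0 < u i) ∧ f = C c * nodal Finset.univ (-u) ∧
      ∀ i, D ≤ ∑ j ∈ Finset.univ.erase i, u j := by
  obtain ⟨c, u, hc, hu, rfl⟩ := exists_eq_C_mul_nodal_neg hf hcoeff hf0 hn
  refine ⟨c, u, hc, hu, rfl, fun i => ?_⟩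
  refine le_sum_erase_of_sum_inv_le (fun j _ => hu j) ?_ (by simpa using hD) (Finset.mem_univ i)
  refine le_of_mul_le_mul_right ?_ hf0
  simp only [coeff_C_mul, nodal_neg_coeff_zero, nodal_neg_coeff_one fun i _ => hu i] at hf1 ⊢
  linarith

lemma coeff_pred_sub_pos (hf : ∀ z : ℂ, 0 < z.im → aeval z f ≠ 0)
    (hcoeff : ∀ k, 0 ≤ f.coeff k) (hf0 : 0 < f.coeff 0) (hn : f.natDegree = n)
    (hf1 : f.coeff 1 ≤ Ψ * f.coeff 0) (hD : Ψ * D = (n - 1) ^ 2) (hn0 : n ≠ 0) :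
    0 < f.coeff (n - 1) - D * f.coeff n := by
  obtain ⟨c, u, hc, hu, rfl, hDu⟩ :=
    exists_eq_C_mul_nodal_neg_of_coeff_one_le hf hcoeff hf0 hn hf1 hD
  have := Fin.pos_iff_nonempty.1 (Nat.pos_of_ne_zero hn0)
  have hpred := nodal_neg_coeff_card_sub_one (u := u) Finset.univ_nonempty
  have htop := nodal_coeff_card (s := Finset.univ) (u := -u)
  obtain ⟨i⟩ := this
  have hlt : D < ∑ i, u i := by
    have := hDu i
    rw [Finset.sum_erase_eq_sub (Finset.mem_univ i)] at this
    linarith [hu i]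
  rw [Finset.card_fin] at hpred htop
  rw [coeff_C_mul, coeff_C_mul, hpred, htop]
  nlinarith

lemma InProperPosition.coeff_pred_sub_le {g : ℝ[X]} {Φ : ℝ} (h : InProperPosition g f)
    (hf : ∀ z : ℂ, 0 < z.im → aeval z f ≠ 0) (hcoeff : ∀ k, 0 ≤ f.coeff k) (hf0 : 0 < f.coeff 0)
    (hn : f.natDegree = n) (hf1 : f.coeff 1 ≤ Ψ * f.coeff 0) (hD : Ψ * D = (n - 1) ^ 2)
    (hn0 : n ≠ 0) (hgdeg : g.natDegree ≤ n) (hg0 : g.coeff 0 ≤ Φ * f.coeff 0) :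
    g.coeff (n - 1) - D * g.coeff n ≤ Φ * (f.coeff (n - 1) - D * f.coeff n) := by
  obtain ⟨c, u, hc, hu, rfl, hDu⟩ :=
    exists_eq_C_mul_nodal_neg_of_coeff_one_le hf hcoeff hf0 hn hf1 hD
  have := Fin.pos_iff_nonempty.1 (Nat.pos_of_ne_zero hn0)
  have hnodal : InProperPosition g (nodal Finset.univ (-u)) := by
    intro z hz
    have := h z hz
    rw [map_mul, aeval_C, map_mul, mul_left_comm, Complex.coe_algebraMap, Complex.conj_ofReal,
      Complex.im_ofReal_mul] at this
    exact nonpos_of_mul_nonpos_right this hc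
  have hpred := nodal_neg_coeff_card_sub_one (u := u) Finset.univ_nonempty
  have htop := nodal_coeff_card (s := Finset.univ) (u := -u)
  have hbound := hnodal.coeff_card_sub_one_sub_le (Φ := Φ * c) Finset.univ_nonempty
    (fun i _ => hu i) (by simpa using hgdeg)
    (by rwa [coeff_C_mul, nodal_neg_coeff_zero, ← mul_assoc] at hg0) fun i _ => hDu i
  rw [Finset.card_fin] at hpred htop hbound
  rw [coeff_C_mul, coeff_C_mul, hpred, htop]
  linarith

end Barrier

end RealRooted

section Multiaffine

open Function

variable {σ : Type*} [DecidableEq σ] {F : (σ → ℂ) → ℂ} {V : Finset σ} {j k : σ} {z w : σ → ℂ}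

/-- The difference operator in the coordinate `k`, which is the partial derivative `∂ₖ` on functions
affine in that coordinate. -/
def coordDeriv (k : σ) : Module.End ℂ ((σ → ℂ) → ℂ) where
  toFun F z := F (update z k 1) - F (update z k 0)
  map_add' F G := by ext z; simp only [Pi.add_apply]; ring
  map_smul' c F := by ext z; simp [mul_sub]

lemma coordDeriv_apply (k : σ) (F : (σ → ℂ) → ℂ) (z : σ → ℂ) :
    coordDeriv k F z = F (update z k 1) - F (update z k 0) := rfl

lemma coordDeriv_commute (j k : σ) : Commute (coordDeriv j) (coordDeriv k) := by
  rcases eq_or_ne j k with rfl | hjk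
  · rfl
  refine LinearMap.ext fun F => funext fun z => ?_
  simp only [Module.End.mul_apply, coordDeriv_apply, update_comm hjk]
  ring

lemma coordDeriv_update_self (F : (σ → ℂ) → ℂ) (z : σ → ℂ) (t : ℂ) :
    coordDeriv k F (update z k t) = coordDeriv k F z := by
  simp only [coordDeriv_apply, update_idem]

lemma coordDeriv_coordDeriv_self (F : (σ → ℂ) → ℂ) : coordDeriv k (coordDeriv k F) = 0 := by
  funext z
  rw [coordDeriv_apply, coordDeriv_update_self, coordDeriv_update_self, sub_self, Pi.zero_apply]

/-- The mixed derivative `∂ᵛ = ∏ₖ ∂ₖ` over the coordinates `k ∈ V`. -/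
noncomputable def iterDeriv (V : Finset σ) : Module.End ℂ ((σ → ℂ) → ℂ) :=
  V.noncommProd coordDeriv fun _ _ _ _ _ => coordDeriv_commute _ _

@[simp] lemma iterDeriv_empty : iterDeriv (∅ : Finset σ) = 1 := Finset.noncommProd_empty _ _

@[simp] lemma iterDeriv_singleton (k : σ) : iterDeriv {k} = coordDeriv k :=
  Finset.noncommProd_singleton _ _

lemma iterDeriv_insert (hk : k ∉ V) (F : (σ → ℂ) → ℂ) :
    iterDeriv (insert k V) F = coordDeriv k (iterDeriv V F) :=
  DFunLike.congr_fun (Finset.noncommProd_insert_of_notMem _ _ _ _ hk) F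

lemma iterDeriv_union {W : Finset σ} (h : Disjoint V W) (F : (σ → ℂ) → ℂ) :
    iterDeriv (V ∪ W) F = iterDeriv V (iterDeriv W F) :=
  DFunLike.congr_fun (Finset.noncommProd_union_of_disjoint h _ _) F

lemma coordDeriv_iterDeriv_erase (hk : k ∈ V) (F : (σ → ℂ) → ℂ) :
    coordDeriv k (iterDeriv (V.erase k) F) = iterDeriv V F := by
  rw [← iterDeriv_insert (Finset.notMem_erase k V), Finset.insert_erase hk]

lemma iterDeriv_comm (V W : Finset σ) (F : (σ → ℂ) → ℂ) :
    iterDeriv V (iterDeriv W F) = iterDeriv W (iterDeriv V F) :=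
  DFunLike.congr_fun (Finset.noncommProd_commute _ _ _ _ fun _ _ =>
    (Finset.noncommProd_commute _ _ _ _ fun _ _ => coordDeriv_commute _ _).symm) F

lemma coordDeriv_iterDeriv_comm (k : σ) (V : Finset σ) (F : (σ → ℂ) → ℂ) :
    coordDeriv k (iterDeriv V F) = iterDeriv V (coordDeriv k F) := by
  simpa only [iterDeriv_singleton] using iterDeriv_comm {k} V F

lemma iterDeriv_congr (F : (σ → ℂ) → ℂ) (h : ∀ k ∉ V, z k = w k) :
    iterDeriv V F z = iterDeriv V F w := by
  induction V using Finset.induction_on generalizing z w with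
  | empty => rw [funext fun k => h k (Finset.notMem_empty k)]
  | insert k V hk ih =>
    have hupdate (t : ℂ) : iterDeriv V F (update z k t) = iterDeriv V F (update w k t) := by
      refine ih fun j hj => ?_
      rcases eq_or_ne j k with rfl | hjk
      · rw [update_self, update_self]
      · rw [update_of_ne hjk, update_of_ne hjk, h j (by simp [hjk, hj])]
    rw [iterDeriv_insert hk, coordDeriv_apply, coordDeriv_apply, hupdate, hupdate]

/-- `F` is affine in each coordinate separately. -/
def IsMultiaffine (F : (σ → ℂ) → ℂ) : Prop :=
  ∀ z k t, F (update z k t) = F (update z k 0) + t * coordDeriv k F z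

namespace IsMultiaffine

lemma update_add (hF : IsMultiaffine F) (z : σ → ℂ) (k : σ) (t : ℂ) :
    F (update z k (z k + t)) = F z + t * coordDeriv k F z := by
  have := hF z k (z k)
  rw [update_eq_self] at this
  rw [hF, this]
  ring

protected lemma coordDeriv (hF : IsMultiaffine F) (k : σ) : IsMultiaffine (coordDeriv k F) := by
  intro z j t
  rcases eq_or_ne j k with rfl | hjk
  · rw [coordDeriv_update_self, coordDeriv_update_self, coordDeriv_coordDeriv_self, Pi.zero_apply,
      mul_zero, add_zero]
  · have h (s : ℂ) := hF (update z k s) j t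
    simp only [coordDeriv_apply, update_comm hjk.symm] at h ⊢
    rw [h, h]
    ring

protected lemma iterDeriv (hF : IsMultiaffine F) (V : Finset σ) :
    IsMultiaffine (iterDeriv V F) := by
  induction V using Finset.induction_on with
  | empty => exact hF
  | insert k V hk ih => rw [iterDeriv_insert hk]; exact ih.coordDeriv k

protected lemma sum {ι : Type*} {s : Finset ι} {G : ι → (σ → ℂ) → ℂ}
    (hG : ∀ i ∈ s, IsMultiaffine (G i)) : IsMultiaffine (∑ i ∈ s, G i) := by
  intro z k t
  simp only [map_sum, Finset.sum_apply, Finset.mul_sum, ← Finset.sum_add_distrib]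
  exact Finset.sum_congr rfl fun i hi => hG i hi z k t

lemma apply_piecewise_add (hF : IsMultiaffine F) (V : Finset σ) (z w : σ → ℂ) :
    F (V.piecewise (z + w) z) = ∑ S ∈ V.powerset, (∏ k ∈ S, w k) * iterDeriv S F z := by
  induction V using Finset.induction_on generalizing F with
  | empty => simp
  | insert k V hk ih =>
    have hstep := hF.update_add (V.piecewise (z + w) z) k (w k)
    rw [Finset.piecewise_eq_of_notMem _ _ _ hk] at hstep
    rw [Finset.piecewise_insert, Pi.add_apply, hstep, ih hF, ih (hF.coordDeriv k),
      Finset.sum_powerset_insert hk, Finset.mul_sum]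
    congr 1
    refine Finset.sum_congr rfl fun S hS => ?_
    have hkS : k ∉ S := fun h => hk (Finset.mem_powerset.1 hS h)
    rw [Finset.prod_insert hkS, iterDeriv_insert hkS, coordDeriv_iterDeriv_comm, mul_assoc]

lemma differentiable [Finite σ] (hF : IsMultiaffine F) : Differentiable ℂ F := by
  have := Fintype.ofFinite σ
  have hpoly : F = fun z => ∑ S ∈ Finset.univ.powerset, (∏ k ∈ S, z k) * iterDeriv S F 0 := by
    funext z
    simpa using hF.apply_piecewise_add Finset.univ 0 z
  rw [hpoly]
  fun_prop

end IsMultiaffine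

/-- `F` takes real values at real points. -/
def IsRealOnReals (F : (σ → ℂ) → ℂ) : Prop :=
  ∀ x : σ → ℝ, (F (Complex.ofReal ∘ x)).im = 0

namespace IsRealOnReals

omit [DecidableEq σ] in
lemma apply_eq_re (hF : IsRealOnReals F) (x : σ → ℝ) :
    F (Complex.ofReal ∘ x) = (F (Complex.ofReal ∘ x)).re :=
  Complex.ext rfl (hF x)

protected lemma coordDeriv (hF : IsRealOnReals F) (k : σ) : IsRealOnReals (coordDeriv k F) := by
  intro x
  have h (t : ℝ) := hF (update x k t)
  simp only [comp_update] at h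
  simpa [coordDeriv_apply] using congrArg₂ (· - ·) (h 1) (h 0)

protected lemma iterDeriv (hF : IsRealOnReals F) (V : Finset σ) :
    IsRealOnReals (iterDeriv V F) := by
  induction V using Finset.induction_on with
  | empty => exact hF
  | insert k V hk ih => rw [iterDeriv_insert hk]; exact ih.coordDeriv k

omit [DecidableEq σ] in
protected lemma sum {ι : Type*} {s : Finset ι} {G : ι → (σ → ℂ) → ℂ}
    (hG : ∀ i ∈ s, IsRealOnReals (G i)) : IsRealOnReals (∑ i ∈ s, G i) := by
  intro x
  rw [Finset.sum_apply, Complex.im_sum]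
  exact Finset.sum_eq_zero fun i hi => hG i hi x

end IsRealOnReals

/-- `F` has no zeros in the product of open upper half-planes. -/
def IsStable (F : (σ → ℂ) → ℂ) : Prop :=
  ∀ z : σ → ℂ, (∀ k, 0 < (z k).im) → F z ≠ 0

omit [DecidableEq σ] in
lemma le_of_forall_im_pos {f g : (σ → ℂ) → ℝ} (hf : Continuous f) (hg : Continuous g)
    (h : ∀ z : σ → ℂ, (∀ k, 0 < (z k).im) → f z ≤ g z) (hz : ∀ k, 0 ≤ (z k).im) : f z ≤ g z := by
  let γ : ℝ → σ → ℂ := fun ε k => z k + ε * Complex.I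
  have hγ : Continuous γ := by fun_prop
  have hγ0 : γ 0 = z := by simp [γ]
  rw [← hγ0]
  refine le_of_tendsto_of_tendsto ((hf.comp hγ).continuousWithinAt (s := Set.Ioi 0))
    ((hg.comp hγ).continuousWithinAt (s := Set.Ioi 0)) ?_
  filter_upwards [self_mem_nhdsWithin] with ε hε
  exact h _ fun k => by simpa [γ] using add_pos_of_nonneg_of_pos (hz k) hε

namespace IsStable

open scoped ComplexConjugate

/- As a function of `z k` alone, `F` has its only zero at `z k - F z / ∂ₖF z`, which therefore does
not lie in the upper half-plane. -/
lemma im_mul_normSq_coordDeriv_le (hF : IsStable F) (hm : IsMultiaffine F)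
    (hz : ∀ k, 0 < (z k).im) (k : σ) :
    (z k).im * Complex.normSq (coordDeriv k F z) ≤ (F z * conj (coordDeriv k F z)).im := by
  set D := coordDeriv k F z with hD
  rcases eq_or_ne D 0 with h0 | h0
  · simp [h0]
  have hzero : F (update z k (z k + -(F z / D))) = 0 := by
    rw [hm.update_add, ← hD, neg_mul, div_mul_cancel₀ _ h0, add_neg_cancel]
  have him : (z k + -(F z / D)).im ≤ 0 := by
    by_contra! hpos
    refine hF _ (fun j => ?_) hzero
    rcases eq_or_ne j k with rfl | hjk
    · rwa [update_self]
    · rw [update_of_ne hjk]; exact hz j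
  have hquot : F z * conj D = Complex.normSq D * (F z / D) := by
    rw [Complex.normSq_eq_conj_mul_self]
    field_simp
  rw [hquot, Complex.im_ofReal_mul, mul_comm]
  refine mul_le_mul_of_nonneg_left ?_ (Complex.normSq_nonneg D)
  rw [Complex.add_im, Complex.neg_im] at him
  linarith

lemma norm_coordDeriv_mul_im_le (hF : IsStable F) (hm : IsMultiaffine F)
    (hz : ∀ k, 0 < (z k).im) (k : σ) : ‖coordDeriv k F z‖ * (z k).im ≤ ‖F z‖ := by
  rcases eq_or_ne (coordDeriv k F z) 0 with h0 | h0
  · simp [h0]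
  have h := (hF.im_mul_normSq_coordDeriv_le hm hz k).trans
    ((Complex.abs_im_le_norm _).trans' (le_abs_self _))
  rw [norm_mul, RCLike.norm_conj, Complex.normSq_eq_norm_sq, sq, ← mul_assoc] at h
  rw [mul_comm]
  exact le_of_mul_le_mul_right h (norm_pos_iff.2 h0)

section Closure

variable [Finite σ]

lemma im_coordDeriv_mul_conj_nonpos (hF : IsStable F) (hm : IsMultiaffine F)
    (hz : ∀ k, 0 ≤ (z k).im) (k : σ) : (coordDeriv k F z * conj (F z)).im ≤ 0 := by
  have hc := hm.differentiable.continuous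
  refine le_of_forall_im_pos (f := fun z => (coordDeriv k F z * conj (F z)).im) (g := fun _ => 0)
    (by fun_prop) (by fun_prop) (fun w hw => ?_) hz
  have h := (mul_nonneg (hw k).le (Complex.normSq_nonneg _)).trans
    (hF.im_mul_normSq_coordDeriv_le hm hw k)
  simp only [Complex.mul_im, Complex.conj_re, Complex.conj_im] at h ⊢
  linarith

lemma norm_iterDeriv_mul_prod_im_le {V : Finset σ} (hF : ∀ S ⊆ V, IsStable (iterDeriv S F))
    (hm : IsMultiaffine F) (hz : ∀ k, 0 ≤ (z k).im) :
    ‖iterDeriv V F z‖ * ∏ k ∈ V, (z k).im ≤ ‖F z‖ := by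
  have hc := hm.differentiable.continuous
  have hcV := (hm.iterDeriv V).differentiable.continuous
  refine le_of_forall_im_pos (f := fun z => ‖iterDeriv V F z‖ * ∏ k ∈ V, (z k).im)
    (g := fun z => ‖F z‖) (by fun_prop) (by fun_prop) (fun w hw => ?_) hz
  induction V using Finset.induction_on with
  | empty => simp
  | insert k V hk ih =>
    have hV := hF V (Finset.subset_insert k V)
    calc ‖iterDeriv (insert k V) F w‖ * ∏ j ∈ insert k V, (w j).im
        = ‖coordDeriv k (iterDeriv V F) w‖ * (w k).im * ∏ j ∈ V, (w j).im := by
          rw [iterDeriv_insert hk, Finset.prod_insert hk, mul_assoc]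
      _ ≤ ‖iterDeriv V F w‖ * ∏ j ∈ V, (w j).im := by
          gcongr
          · exact Finset.prod_nonneg fun j _ => (hw j).le
          · exact hV.norm_coordDeriv_mul_im_le (hm.iterDeriv V) hw k
      _ ≤ ‖F w‖ := ih (fun S hS => hF S (hS.trans (Finset.subset_insert k V)))
          (hm.iterDeriv V).differentiable.continuous

end Closure

end IsStable

/-- The operator `∑ₖ ∏_{j ≠ k} ∂ⱼ` over `k ∈ V`, which differentiates in all the variables of `V`
but one. -/
noncomputable def leaveOneOut (V : Finset σ) : Module.End ℂ ((σ → ℂ) → ℂ) :=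
  ∑ k ∈ V, iterDeriv (V.erase k)

lemma leaveOneOut_apply (V : Finset σ) (F : (σ → ℂ) → ℂ) :
    leaveOneOut V F = ∑ k ∈ V, iterDeriv (V.erase k) F := by
  rw [leaveOneOut, LinearMap.sum_apply]

lemma iterDeriv_leaveOneOut (L V : Finset σ) (F : (σ → ℂ) → ℂ) :
    iterDeriv L (leaveOneOut V F) = leaveOneOut V (iterDeriv L F) := by
  simp only [leaveOneOut_apply, map_sum, iterDeriv_comm L]

open scoped ComplexConjugate in
lemma im_leaveOneOut_mul_conj_pos (hV : V.Nonempty) (hm : IsMultiaffine F)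
    (hstable : ∀ S ⊆ V, IsStable (iterDeriv S F)) (hz : ∀ k, 0 < (z k).im) :
    0 < (leaveOneOut V F z * conj (iterDeriv V F z)).im := by
  rw [leaveOneOut_apply, Finset.sum_apply, Finset.sum_mul, Complex.im_sum]
  refine Finset.sum_pos (fun k hk => ?_) hV
  have h := (hstable _ (V.erase_subset k)).im_mul_normSq_coordDeriv_le
    (hm.iterDeriv (V.erase k)) hz k
  rw [coordDeriv_iterDeriv_erase hk] at h
  exact (mul_pos (hz k) (Complex.normSq_pos.2 (hstable V subset_rfl z hz))).trans_le h

lemma subset_sdiff_of_subset_sdiff {U L : Finset σ} (hV : V ⊆ U) (hL : L ⊆ U \ V) : V ⊆ U \ L :=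
  Finset.subset_sdiff.2 ⟨hV, (Finset.subset_sdiff.1 hL).2.symm⟩

/-- A real multiaffine function all of whose mixed derivatives in the variables of `U` are stable
and positive far out on the diagonal. -/
structure IsStableFamily (U : Finset σ) (F : (σ → ℂ) → ℂ) : Prop where
  isMultiaffine : IsMultiaffine F
  isRealOnReals : IsRealOnReals F
  isStable : ∀ L ⊆ U, IsStable (iterDeriv L F)
  eventually_pos : ∀ L ⊆ U, ∀ᶠ x : ℝ in Filter.atTop, 0 < (iterDeriv L F fun _ => x).re

namespace IsStableFamily

variable {U : Finset σ}

protected lemma iterDeriv (hF : IsStableFamily U F) (hV : V ⊆ U) :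
    IsStableFamily (U \ V) (iterDeriv V F) where
  isMultiaffine := hF.isMultiaffine.iterDeriv V
  isRealOnReals := hF.isRealOnReals.iterDeriv V
  isStable L hL := by
    rw [← iterDeriv_union (Finset.disjoint_of_subset_left hL Finset.sdiff_disjoint)]
    exact hF.isStable _ (Finset.union_subset (hL.trans Finset.sdiff_subset) hV)
  eventually_pos L hL := by
    rw [← iterDeriv_union (Finset.disjoint_of_subset_left hL Finset.sdiff_disjoint)]
    exact hF.eventually_pos _ (Finset.union_subset (hL.trans Finset.sdiff_subset) hV)

protected lemma mono {W : Finset σ} (hF : IsStableFamily U F) (hW : W ⊆ U) :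
    IsStableFamily W F where
  isMultiaffine := hF.isMultiaffine
  isRealOnReals := hF.isRealOnReals
  isStable L hL := hF.isStable L (hL.trans hW)
  eventually_pos L hL := hF.eventually_pos L (hL.trans hW)

protected lemma leaveOneOut (hF : IsStableFamily U F) (hVU : V ⊆ U) (hV : V.Nonempty) :
    IsStableFamily (U \ V) (leaveOneOut V F) where
  isMultiaffine := by
    rw [leaveOneOut_apply]
    exact .sum fun k _ => hF.isMultiaffine.iterDeriv _
  isRealOnReals := by
    rw [leaveOneOut_apply]
    exact .sum fun k _ => hF.isRealOnReals.iterDeriv _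
  isStable L hL z hz h0 := by
    have hG := hF.iterDeriv (hL.trans Finset.sdiff_subset)
    have := im_leaveOneOut_mul_conj_pos hV hG.isMultiaffine
      (hG.mono (subset_sdiff_of_subset_sdiff hVU hL)).isStable hz
    rw [← iterDeriv_leaveOneOut, h0, zero_mul] at this
    exact this.false
  eventually_pos L hL := by
    have hG := (hF.iterDeriv (hL.trans Finset.sdiff_subset)).mono
      (subset_sdiff_of_subset_sdiff hVU hL)
    filter_upwards [(Filter.eventually_all_finset V).2 fun k _ =>
      hG.eventually_pos _ (V.erase_subset k)] with x hx
    rw [iterDeriv_leaveOneOut, leaveOneOut_apply, Finset.sum_apply, Complex.re_sum]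
    exact Finset.sum_pos hx hV

end IsStableFamily

section LinePoly

/-- The polynomial `t ↦ F (x + t 1_V)` for multiaffine `F`, given by its Taylor coefficients. -/
noncomputable def linePoly (V : Finset σ) (F : (σ → ℂ) → ℂ) (x : σ → ℝ) : ℝ[X] :=
  ∑ S ∈ V.powerset, monomial S.card (iterDeriv S F (Complex.ofReal ∘ x)).re

variable {x : σ → ℝ}

lemma aeval_linePoly (hm : IsMultiaffine F) (hr : IsRealOnReals F) (t : ℂ) :
    aeval t (linePoly V F x)
      = F (V.piecewise (Complex.ofReal ∘ x + fun _ => t) (Complex.ofReal ∘ x)) := by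
  rw [hm.apply_piecewise_add, linePoly, map_sum]
  refine Finset.sum_congr rfl fun S _ => ?_
  rw [aeval_monomial, Finset.prod_const, (hr.iterDeriv S).apply_eq_re, Complex.coe_algebraMap,
    Complex.ofReal_re, mul_comm]

lemma coeff_linePoly (V : Finset σ) (F : (σ → ℂ) → ℂ) (x : σ → ℝ) (m : ℕ) :
    (linePoly V F x).coeff m
      = ∑ S ∈ V.powersetCard m, (iterDeriv S F (Complex.ofReal ∘ x)).re := by
  simp only [linePoly, finsetSum_coeff, coeff_monomial, Finset.powersetCard_eq_filter,
    Finset.sum_filter]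

lemma coeff_linePoly_zero : (linePoly V F x).coeff 0 = (F (Complex.ofReal ∘ x)).re := by
  simp [coeff_linePoly]

lemma coeff_linePoly_one :
    (linePoly V F x).coeff 1 = ∑ k ∈ V, (coordDeriv k F (Complex.ofReal ∘ x)).re := by
  simp [coeff_linePoly, Finset.powersetCard_one]

lemma coeff_linePoly_card :
    (linePoly V F x).coeff V.card = (iterDeriv V F (Complex.ofReal ∘ x)).re := by
  simp [coeff_linePoly]

lemma coeff_linePoly_card_sub_one (hV : V.Nonempty) :
    (linePoly V F x).coeff (V.card - 1) = (leaveOneOut V F (Complex.ofReal ∘ x)).re := by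
  have himage : V.powersetCard (V.card - 1) = V.image V.erase := by
    ext S
    rw [Finset.mem_powersetCard, Finset.mem_image,
      eq_tsub_iff_add_eq_of_le (Nat.one_le_iff_ne_zero.2 hV.card_pos.ne'),
      ← Finset.exists_eq_insert_iff]
    exact ⟨fun ⟨k, hk, h⟩ => ⟨k, by simp [← h], by rw [← h, Finset.erase_insert hk]⟩,
      fun ⟨k, hk, h⟩ => ⟨k, by simp [← h], by rw [← h, Finset.insert_erase hk]⟩⟩
  rw [coeff_linePoly, himage, Finset.sum_image V.erase_injOn, leaveOneOut_apply, Finset.sum_apply,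
    Complex.re_sum]

lemma natDegree_linePoly_le : (linePoly V F x).natDegree ≤ V.card := by
  refine natDegree_le_iff_coeff_eq_zero.2 fun m hm => ?_
  rw [coeff_linePoly, Finset.powersetCard_eq_empty.2 hm, Finset.sum_empty]

end LinePoly

section Barrier

lemma leaveOneOut_re_eq_sub (hm : IsMultiaffine F) (hV : V.Nonempty) (x : σ → ℝ) (d : ℝ)
    {X : σ → ℝ} (hX : X = V.piecewise (fun _ => (∑ k ∈ V, x k) / V.card + d) x) :
    (leaveOneOut V F (Complex.ofReal ∘ x)).re
      = (leaveOneOut V F (Complex.ofReal ∘ X)).re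
        - V.card * d * (iterDeriv V F (Complex.ofReal ∘ X)).re := by
  set c := (∑ k ∈ V, x k) / V.card + d
  have htop : iterDeriv V F (Complex.ofReal ∘ X) = iterDeriv V F (Complex.ofReal ∘ x) :=
    iterDeriv_congr F fun k hk => by simp [hX, hk]
  have hterm : ∀ k ∈ V, (iterDeriv (V.erase k) F (Complex.ofReal ∘ X)).re
      = (iterDeriv (V.erase k) F (Complex.ofReal ∘ x)).re
        + (c - x k) * (iterDeriv V F (Complex.ofReal ∘ x)).re := by
    intro k hk
    have h := (hm.iterDeriv (V.erase k)).update_add (Complex.ofReal ∘ x) k (c - x k : ℝ)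
    have hcongr : iterDeriv (V.erase k) F (Complex.ofReal ∘ X)
        = iterDeriv (V.erase k) F (update (Complex.ofReal ∘ x) k c) := by
      refine iterDeriv_congr F fun j hj => ?_
      rcases eq_or_ne j k with rfl | hjk
      · simp [hX, hk]
      · have hjV : j ∉ V := fun h => hj (Finset.mem_erase.2 ⟨hjk, h⟩)
        simp [hX, hjk, hjV]
    rw [Function.comp_apply, ← Complex.ofReal_add, add_sub_cancel,
      coordDeriv_iterDeriv_erase hk] at h
    rw [hcongr, h, Complex.add_re, Complex.re_ofReal_mul]
  have hcard : (V.card : ℝ) ≠ 0 := by exact_mod_cast hV.card_pos.ne'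
  have hshift : ∑ k ∈ V, (c - x k) = V.card * d := by
    rw [Finset.sum_sub_distrib, Finset.sum_const, nsmul_eq_mul, mul_add, mul_div_cancel₀ _ hcard,
      add_sub_cancel_left]
  simp only [leaveOneOut_apply, Finset.sum_apply, Complex.re_sum]
  rw [Finset.sum_congr rfl hterm, Finset.sum_add_distrib, ← Finset.sum_mul, hshift, htop,
    add_sub_cancel_right]

variable [Finite σ] {x : σ → ℝ}

lemma inProperPosition_linePoly (hF : IsStable F) (hm : IsMultiaffine F) (hr : IsRealOnReals F)
    (k : σ) : InProperPosition (linePoly V (coordDeriv k F) x) (linePoly V F x) := by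
  intro t ht
  rw [aeval_linePoly (hm.coordDeriv k) (hr.coordDeriv k), aeval_linePoly hm hr]
  refine hF.im_coordDeriv_mul_conj_nonpos hm (fun j => ?_) k
  by_cases hj : j ∈ V <;> simp [Finset.piecewise, hj, ht.le]

lemma aeval_linePoly_ne_zero (hstable : ∀ S ⊆ V, IsStable (iterDeriv S F)) (hm : IsMultiaffine F)
    (hr : IsRealOnReals F) (hpos : 0 < (iterDeriv V F (Complex.ofReal ∘ x)).re) {t : ℂ}
    (ht : 0 < t.im) : aeval t (linePoly V F x) ≠ 0 := by
  rw [aeval_linePoly hm hr, ← norm_pos_iff]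
  set z := V.piecewise (Complex.ofReal ∘ x + fun _ => t) (Complex.ofReal ∘ x) with hz
  have hz_mem : ∀ k ∈ V, (z k).im = t.im := fun k hk => by simp [hz, hk]
  have hz_notMem : ∀ k ∉ V, z k = x k := fun k hk => by simp [hz, hk]
  have hz_im : ∀ k, 0 ≤ (z k).im := fun k => by
    by_cases hk : k ∈ V
    · rw [hz_mem k hk]; exact ht.le
    · rw [hz_notMem k hk, Complex.ofReal_im]
  have htop : iterDeriv V F z = iterDeriv V F (Complex.ofReal ∘ x) := iterDeriv_congr F hz_notMem
  refine lt_of_lt_of_le ?_ (IsStable.norm_iterDeriv_mul_prod_im_le hstable hm hz_im)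
  rw [htop]
  exact mul_pos (hpos.trans_le (Complex.re_le_norm _))
    (Finset.prod_pos fun k hk => by rwa [hz_mem k hk])

variable {Φ d : ℝ}

lemma leaveOneOut_re_sub_pos_and_le {X : σ → ℝ} (hstable : ∀ S ⊆ V, IsStable (iterDeriv S F))
    (hm : IsMultiaffine F) (hr : IsRealOnReals F) (hV : V.Nonempty)
    (hd : V.card ^ 2 * Φ * d = (V.card - 1) ^ 2)
    (hpos : ∀ S ⊆ V, 0 < (iterDeriv S F (Complex.ofReal ∘ X)).re)
    (hΦ : ∀ k ∈ V, (coordDeriv k F (Complex.ofReal ∘ X)).re ≤ Φ * (F (Complex.ofReal ∘ X)).re) :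
    0 < (leaveOneOut V F (Complex.ofReal ∘ X)).re
        - V.card * d * (iterDeriv V F (Complex.ofReal ∘ X)).re ∧
      ∀ j, (coordDeriv j F (Complex.ofReal ∘ X)).re ≤ Φ * (F (Complex.ofReal ∘ X)).re →
        (leaveOneOut V (coordDeriv j F) (Complex.ofReal ∘ X)).re
            - V.card * d * (iterDeriv V (coordDeriv j F) (Complex.ofReal ∘ X)).re
          ≤ Φ * ((leaveOneOut V F (Complex.ofReal ∘ X)).re
            - V.card * d * (iterDeriv V F (Complex.ofReal ∘ X)).re) := by
  have hF : IsStable F := by simpa using hstable ∅ V.empty_subset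
  have hroots : ∀ t : ℂ, 0 < t.im → aeval t (linePoly V F X) ≠ 0 := fun t ht =>
    aeval_linePoly_ne_zero hstable hm hr (hpos V subset_rfl) ht
  have hcoeff : ∀ m, 0 ≤ (linePoly V F X).coeff m := fun m => by
    rw [coeff_linePoly]
    exact Finset.sum_nonneg fun S hS => (hpos S (Finset.mem_powersetCard.1 hS).1).le
  have hcoeff0 : 0 < (linePoly V F X).coeff 0 := by
    simpa [coeff_linePoly_zero] using hpos ∅ V.empty_subset
  have hdeg : (linePoly V F X).natDegree = V.card :=
    natDegree_linePoly_le.antisymm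
      (le_natDegree_of_ne_zero (by rw [coeff_linePoly_card]; exact (hpos V subset_rfl).ne'))
  have hcoeff1 : (linePoly V F X).coeff 1 ≤ V.card * Φ * (linePoly V F X).coeff 0 := by
    rw [coeff_linePoly_one, coeff_linePoly_zero, mul_assoc, ← nsmul_eq_mul]
    exact Finset.sum_le_card_nsmul _ _ _ hΦ
  have hD : V.card * Φ * (V.card * d) = ((V.card : ℝ) - 1) ^ 2 := by rw [← hd]; ring
  constructor
  · simpa only [coeff_linePoly_card_sub_one hV, coeff_linePoly_card] using
      coeff_pred_sub_pos hroots hcoeff hcoeff0 hdeg hcoeff1 hD hV.card_pos.ne'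
  · intro j hj
    simpa only [coeff_linePoly_card_sub_one hV, coeff_linePoly_card] using
      (inProperPosition_linePoly hF hm hr j).coeff_pred_sub_le hroots hcoeff
        hcoeff0 hdeg hcoeff1 hD hV.card_pos.ne' natDegree_linePoly_le
        (by simpa only [coeff_linePoly_zero] using hj)

/-- A barrier at the corner `b`: wherever the coordinates in `U` are at least `b`, all mixed
derivatives of `F` in the variables of `U` are positive and have logarithmic derivatives at most `Φ`
in those variables. The coordinates outside `U`, which have already been processed, only need to be
at least `b - d`. -/
def HasBarrier (Φ b d : ℝ) (U : Finset σ) (F : (σ → ℂ) → ℂ) : Prop :=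
  ∀ L ⊆ U, ∀ x : σ → ℝ, (∀ k ∈ U, b ≤ x k) → (∀ k ∉ U, b - d ≤ x k) →
    0 < (iterDeriv L F (Complex.ofReal ∘ x)).re ∧
      ∀ k ∈ U, (coordDeriv k (iterDeriv L F) (Complex.ofReal ∘ x)).re
        ≤ Φ * (iterDeriv L F (Complex.ofReal ∘ x)).re

/- Replacing the coordinates in `V` by their mean plus `d` changes `leaveOneOut V F` by
`#V * d * ∂ᵛ F`, which is exactly the loss in the barrier estimate. -/
lemma HasBarrier.leaveOneOut {b : ℝ} {U : Finset σ} (hB : HasBarrier Φ b d U F)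
    (hF : IsStableFamily U F) (hVU : V ⊆ U) (hV : V.Nonempty)
    (hd : V.card ^ 2 * Φ * d = (V.card - 1) ^ 2) :
    HasBarrier Φ b d (U \ V) (leaveOneOut V F) := by
  intro L hL x hxU hx
  set G := iterDeriv L F
  have hLU : L ⊆ U := hL.trans Finset.sdiff_subset
  have hG := (hF.iterDeriv hLU).mono (subset_sdiff_of_subset_sdiff hVU hL)
  obtain ⟨X, hX⟩ : ∃ X, X = V.piecewise (fun _ => (∑ k ∈ V, x k) / V.card + d) x := ⟨_, rfl⟩
  have hmean : b ≤ (∑ k ∈ V, x k) / V.card + d := by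
    rw [← sub_le_iff_le_add, le_div_iff₀ (by exact_mod_cast hV.card_pos), mul_comm, ← nsmul_eq_mul]
    exact Finset.card_nsmul_le_sum _ _ _ fun k hk => hx k fun h => (Finset.mem_sdiff.1 h).2 hk
  have hXU : ∀ k ∈ U, b ≤ X k := fun k hk => by
    by_cases hkV : k ∈ V
    · simpa [hX, hkV] using hmean
    · simpa [hX, hkV] using hxU k (Finset.mem_sdiff.2 ⟨hk, hkV⟩)
  have hX_notMem : ∀ k ∉ U, b - d ≤ X k := fun k hk => by
    have hkV : k ∉ V := fun h => hk (hVU h)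
    simpa [hX, hkV] using hx k fun h => hk (Finset.mem_sdiff.1 h).1
  have hpos : ∀ S ⊆ V, 0 < (iterDeriv S G (Complex.ofReal ∘ X)).re := fun S hS => by
    rw [← iterDeriv_union
      (Finset.disjoint_of_subset_left hS (Finset.subset_sdiff.1 hL).2.symm)]
    exact (hB _ (Finset.union_subset (hS.trans hVU) hLU) X hXU hX_notMem).1
  have hΦ := (hB L hLU X hXU hX_notMem).2
  obtain ⟨hTpos, hTle⟩ := leaveOneOut_re_sub_pos_and_le hG.isStable hG.isMultiaffine
    hG.isRealOnReals hV hd hpos fun k hk => hΦ k (hVU hk)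
  rw [iterDeriv_leaveOneOut, leaveOneOut_re_eq_sub hG.isMultiaffine hV x d hX]
  refine ⟨hTpos, fun k hk => ?_⟩
  rw [← iterDeriv_singleton, iterDeriv_leaveOneOut, iterDeriv_singleton,
    leaveOneOut_re_eq_sub (hG.isMultiaffine.coordDeriv k) hV x d hX]
  exact hTle k (hΦ k (Finset.mem_sdiff.1 hk).1)

end Barrier

section Interlacing

open scoped ComplexConjugate

lemma deriv_re_nonneg_of_im_nonneg {f : ℂ → ℂ} {D : ℂ} {x : ℝ} (hD : HasDerivAt f D x)
    (hx : (f x).im = 0) (him : ∀ z : ℂ, 0 < z.im → 0 ≤ (f z).im) : 0 ≤ D.re := by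
  have hline : HasDerivAt (fun t : ℝ => (x : ℂ) + t * Complex.I) Complex.I 0 := by
    simpa using ((Complex.ofRealCLM.hasDerivAt (x := 0)).mul_const Complex.I).const_add (x : ℂ)
  have hf : HasDerivAt (fun t : ℝ => f (x + t * Complex.I)) (D * Complex.I) 0 := by
    refine HasDerivAt.comp (h₂ := f) (h := fun t : ℝ => (x : ℂ) + t * Complex.I) 0 ?_ hline
    simpa using hD
  have hslope := (Complex.imCLM.hasFDerivAt.comp_hasDerivAt 0 hf).hasDerivWithinAt
    (s := Set.Ioi 0)
  rw [hasDerivWithinAt_iff_tendsto_slope' Set.self_notMem_Ioi] at hslope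
  have hnonneg : 0 ≤ (D * Complex.I).im := by
    refine ge_of_tendsto hslope ?_
    filter_upwards [self_mem_nhdsWithin] with t ht
    rw [slope_def_field]
    refine div_nonneg ?_ (sub_nonneg.2 (Set.mem_Ioi.1 ht).le)
    simpa [hx] using him (x + t * Complex.I) (by simpa using ht)
  simpa using hnonneg

lemma monotoneOn_re_of_im_nonneg {f : ℂ → ℂ} {s : Set ℝ} (hs : Convex ℝ s)
    (hf : ∀ x ∈ s, DifferentiableAt ℂ f x) (hreal : ∀ x ∈ s, (f x).im = 0)
    (him : ∀ z : ℂ, 0 < z.im → 0 ≤ (f z).im) : MonotoneOn (fun x : ℝ => (f x).re) s := by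
  have hderiv : ∀ x ∈ s, HasDerivAt (fun x : ℝ => (f x).re) (deriv f x).re x := fun x hx =>
    (hf x hx).hasDerivAt.real_of_complex
  refine monotoneOn_of_deriv_nonneg hs
    (fun x hx => (hderiv x hx).continuousAt.continuousWithinAt)
    (fun x hx => (hderiv x (interior_subset hx)).differentiableAt.differentiableWithinAt)
    fun x hx => ?_
  have hxs := interior_subset hx
  rw [(hderiv x hxs).deriv]
  exact deriv_re_nonneg_of_im_nonneg (hf x hxs).hasDerivAt (hreal x hxs) him

lemma monotoneOn_re_div_re {f g : ℂ → ℂ} {s : Set ℝ} (hs : Convex ℝ s) (hf : Differentiable ℂ f)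
    (hg : Differentiable ℂ g) (hfreal : ∀ x : ℝ, (f x).im = 0) (hgreal : ∀ x : ℝ, (g x).im = 0)
    (him : ∀ z : ℂ, 0 < z.im → 0 ≤ (f z * conj (g z)).im) (hpos : ∀ x ∈ s, 0 < (g x).re) :
    MonotoneOn (fun x : ℝ => (f x).re / (g x).re) s := by
  have hquot : ∀ x : ℝ, f x / g x = ((f x).re / (g x).re : ℝ) := fun x => by
    rw [Complex.ofReal_div, ← Complex.ext (z := f x) (w := (f x).re) rfl (hfreal x),
      ← Complex.ext (z := g x) (w := (g x).re) rfl (hgreal x)]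
  have hmono := monotoneOn_re_of_im_nonneg (f := fun z => f z / g z) hs
    (fun x hx => (hf x).div (hg x) fun h => (hpos x hx).ne' (by rw [h, Complex.zero_re]))
    (fun x _ => by rw [hquot, Complex.ofReal_im]) fun z hz => by
      rw [div_eq_mul_inv, Complex.inv_def, ← mul_assoc, mul_comm, Complex.im_ofReal_mul]
      exact mul_nonneg (inv_nonneg.2 (Complex.normSq_nonneg _)) (him z hz)
  simpa only [hquot, Complex.ofReal_re] using hmono

lemma re_pos_of_re_pos_left {f g : ℂ → ℂ} {M : ℝ} (hf : Differentiable ℂ f)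
    (hg : Differentiable ℂ g) (hfreal : ∀ x : ℝ, (f x).im = 0) (hgreal : ∀ x : ℝ, (g x).im = 0)
    (him : ∀ z : ℂ, 0 < z.im → 0 ≤ (f z * conj (g z)).im) (hpos : ∀ x : ℝ, M ≤ x → 0 < (g x).re)
    (hM : 0 < (f M).re) {x : ℝ} (hx : M ≤ x) : 0 < (f x).re := by
  have hmono := monotoneOn_re_div_re (convex_Ici M) hf hg hfreal hgreal him hpos
  exact (div_pos_iff_of_pos_right (hpos x hx)).1
    ((div_pos hM (hpos M le_rfl)).trans_le (hmono Set.self_mem_Ici hx hx))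

lemma re_pos_of_eventually_re_pos {f g : ℂ → ℂ} {M : ℝ} (hf : Differentiable ℂ f)
    (hg : Differentiable ℂ g) (hfreal : ∀ x : ℝ, (f x).im = 0) (hgreal : ∀ x : ℝ, (g x).im = 0)
    (him : ∀ z : ℂ, 0 < z.im → 0 ≤ (g z * conj (f z)).im) (hpos : ∀ x : ℝ, M ≤ x → 0 < (g x).re)
    (hev : ∀ᶠ x : ℝ in Filter.atTop, 0 < (f x).re) {x : ℝ} (hx : M ≤ x) : 0 < (f x).re := by
  have hmono := monotoneOn_re_div_re (convex_Ici M) hf.fun_neg hg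
    (fun x => by rw [Complex.neg_im, hfreal, neg_zero]) hgreal
    (fun z hz => by
      have := him z hz
      simp only [Complex.mul_im, Complex.conj_re, Complex.conj_im, Complex.neg_re,
        Complex.neg_im] at this ⊢
      linarith) hpos
  obtain ⟨y, hy, hxy⟩ := (hev.and (Filter.eventually_ge_atTop x)).exists
  have hy' := hpos y (hx.trans hxy)
  have hle := hmono hx (hx.trans hxy) hxy
  simp only [Complex.neg_re, neg_div, neg_le_neg_iff] at hle
  exact (div_pos_iff_of_pos_right (hpos x hx)).1 ((div_pos hy hy').trans_le hle)

variable [Finite σ]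

/- On the diagonal `∂ᵛ F / leaveOneOut V F` decreases and `∂^{V \ k} F / ∂ᵛ F` increases, so
positivity travels from infinity down to `M` for the former and from `M` up for the latter. -/
lemma IsStableFamily.exists_iterDeriv_erase_pos {M : ℝ} (hF : IsStableFamily V F)
    (hV : V.Nonempty) (hpos : ∀ x : ℝ, M ≤ x → 0 < (leaveOneOut V F fun _ => x).re) :
    ∃ k ∈ V, ∀ x : ℝ, M ≤ x → 0 < (iterDeriv (V.erase k) F fun _ => x).re := by
  have := Fintype.ofFinite σ
  have hT := hF.leaveOneOut subset_rfl hV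
  have hdiff : ∀ {G : (σ → ℂ) → ℂ}, IsMultiaffine G → Differentiable ℂ fun z : ℂ => G fun _ => z :=
    fun hG => hG.differentiable.comp (by fun_prop)
  have hm (S : Finset σ) := hdiff (hF.isMultiaffine.iterDeriv S)
  have hr (S : Finset σ) (x : ℝ) := hF.isRealOnReals.iterDeriv S fun _ => x
  have htop : ∀ x : ℝ, M ≤ x → 0 < (iterDeriv V F fun _ => x).re := fun x =>
    re_pos_of_eventually_re_pos (hm V) (hdiff hT.isMultiaffine) (hr V)
      (fun x => hT.isRealOnReals fun _ => x)
      (fun z hz => (im_leaveOneOut_mul_conj_pos hV hF.isMultiaffine hF.isStable fun _ => hz).le)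
      hpos (hF.eventually_pos V subset_rfl)
  obtain ⟨k, hk, hkpos⟩ : ∃ k ∈ V, 0 < (iterDeriv (V.erase k) F fun _ => M).re := by
    by_contra! hle
    refine (hpos M le_rfl).not_ge ?_
    rw [leaveOneOut_apply, Finset.sum_apply, Complex.re_sum]
    exact Finset.sum_nonpos hle
  refine ⟨k, hk, fun x => re_pos_of_re_pos_left (hm _) (hm V) (hr _) (hr V) (fun z hz => ?_)
    htop hkpos⟩
  have := (hF.isStable _ (V.erase_subset k)).im_mul_normSq_coordDeriv_le
    (hF.isMultiaffine.iterDeriv _) (z := fun _ => z) (fun _ => hz) k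
  rw [coordDeriv_iterDeriv_erase hk] at this
  exact (mul_nonneg hz.le (Complex.normSq_nonneg _)).trans this

/- The barrier is transported through one block at a time; on the way back, interlacing selects the
coordinate of that block that is not differentiated. -/
theorem IsStableFamily.exists_iterDeriv_biUnion_erase_pos {ι : Type*} {s : Finset ι}
    {B : ι → Finset σ} {Φ b d : ℝ} (hB : (s : Set ι).PairwiseDisjoint B)
    (hne : ∀ i, (B i).Nonempty)
    (hd : ∀ i ∈ s, (B i).card ^ 2 * Φ * d = ((B i).card - 1) ^ 2)
    (hF : IsStableFamily (s.biUnion B) F) (hbar : HasBarrier Φ b d (s.biUnion B) F) :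
    ∃ c : ι → σ, (∀ i, c i ∈ B i) ∧ ∀ x : ℝ, b - d ≤ x →
      0 < (iterDeriv (s.biUnion fun i => (B i).erase (c i)) F fun _ => x).re := by
  classical
  induction s using Finset.induction_on generalizing F with
  | empty =>
    choose c hc using hne
    refine ⟨c, hc, fun x hx => ?_⟩
    rw [Finset.biUnion_empty]
    exact (hbar ∅ (Finset.empty_subset _) (fun _ => x) (by simp) fun _ _ => hx).1
  | insert i s hi ih =>
    rw [Finset.forall_mem_insert] at hd
    rw [Finset.coe_insert] at hB
    have hBi : Disjoint (s.biUnion B) (B i) := (Finset.disjoint_biUnion_left _ _ _).2 fun j hj =>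
      hB (by simp [hj]) (by simp) fun h => hi (h ▸ hj)
    have hsdiff : (insert i s).biUnion B \ B i = s.biUnion B := by
      rw [Finset.biUnion_insert, Finset.union_sdiff_cancel_left hBi.symm]
    have hBi_subset : B i ⊆ (insert i s).biUnion B :=
      Finset.subset_biUnion_of_mem B (Finset.mem_insert_self i s)
    obtain ⟨c, hc, hpos⟩ := ih (hB.subset (Set.subset_insert _ _)) hd.2
      (hsdiff ▸ hF.leaveOneOut hBi_subset (hne i))
      (hsdiff ▸ hbar.leaveOneOut hF hBi_subset (hne i) hd.1)
    have hW : (s.biUnion fun j => (B j).erase (c j)) ⊆ s.biUnion B :=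
      Finset.biUnion_mono fun j _ => Finset.erase_subset _ _
    simp only [iterDeriv_leaveOneOut] at hpos
    obtain ⟨k, hk, hkpos⟩ := ((hF.iterDeriv (hW.trans (hsdiff ▸ Finset.sdiff_subset))).mono
      (subset_sdiff_of_subset_sdiff hBi_subset (hsdiff.symm ▸ hW))).exists_iterDeriv_erase_pos
      (hne i) hpos
    have hcongr : (insert i s).biUnion (fun j => (B j).erase (update c i k j))
        = (B i).erase k ∪ s.biUnion fun j => (B j).erase (c j) := by
      rw [Finset.biUnion_insert, update_self]
      refine congrArg _ (Finset.biUnion_congr rfl fun j hj => ?_)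
      rw [update_of_ne (ne_of_mem_of_not_mem hj hi)]
    refine ⟨update c i k, ?_, ?_⟩
    · rw [forall_update_iff c fun j k => k ∈ B j]
      exact ⟨hk, fun j _ => hc j⟩
    · rw [hcongr]
      simp only [iterDeriv_union
        (Finset.disjoint_of_subset_left (Finset.erase_subset _ _)
          (Finset.disjoint_of_subset_right hW hBi.symm))]
      exact hkpos

end Interlacing
end Multiaffine

section ErasedDet

open Function

variable {σ : Type*} [DecidableEq σ] {A : Matrix σ σ ℂ} {V : Finset σ} {k : σ} {u y : σ → ℂ}

/-- The matrix `diag y - A` with the rows indexed by `V` replaced by rows of the identity. Its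
determinant is the principal minor of `diag y - A` on the complement of `V`. -/
def erasedDiagSub (A : Matrix σ σ ℂ) (V : Finset σ) (y : σ → ℂ) : Matrix σ σ ℂ :=
  of fun i => if i ∈ V then Pi.single i 1 else (diagonal y - A) i

lemma erasedDiagSub_empty (y : σ → ℂ) : erasedDiagSub A ∅ y = diagonal y - A := by
  ext; simp [erasedDiagSub]

lemma erasedDiagSub_update_of_notMem (hk : k ∉ V) (t : ℂ) :
    erasedDiagSub A V (update y k t)
      = (erasedDiagSub A V y).updateRow k (t • Pi.single k 1 - A k) := by
  ext i j
  rcases eq_or_ne i k with rfl | hi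
  · simp [erasedDiagSub, hk, diagonal_apply, Pi.single_apply, eq_comm]
  · by_cases hV : i ∈ V <;> simp [erasedDiagSub, diagonal_apply, hi, hV]

lemma updateRow_erasedDiagSub (A : Matrix σ σ ℂ) (V : Finset σ) (y : σ → ℂ) (k : σ) :
    (erasedDiagSub A V y).updateRow k (Pi.single k 1) = erasedDiagSub A (insert k V) y := by
  ext i j
  rcases eq_or_ne i k with rfl | hi
  · simp [erasedDiagSub]
  · simp [erasedDiagSub, hi]

variable [Fintype σ]

lemma erasedDiagSub_univ (y : σ → ℂ) : erasedDiagSub A Finset.univ y = 1 := by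
  ext i j
  simp [erasedDiagSub, Pi.single_apply, one_apply, eq_comm]

lemma erasedDiagSub_mulVec_of_mem (hk : k ∈ V) (y u : σ → ℂ) :
    (erasedDiagSub A V y *ᵥ u) k = u k := by
  simp [erasedDiagSub, mulVec, hk]

lemma erasedDiagSub_mulVec_of_notMem (hk : k ∉ V) (y u : σ → ℂ) :
    (erasedDiagSub A V y *ᵥ u) k = y k * u k - (A *ᵥ u) k := by
  rw [← mulVec_diagonal, ← Pi.sub_apply, ← sub_mulVec]
  simp [erasedDiagSub, mulVec, hk]

lemma star_dotProduct_mulVec_eq_sum_sub (hu : ∀ k ∈ V, u k = 0) (y : σ → ℂ) :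
    star u ⬝ᵥ (A *ᵥ u)
      = ∑ k, y k * Complex.normSq (u k) - star u ⬝ᵥ (erasedDiagSub A V y *ᵥ u) := by
  rw [dotProduct, dotProduct, ← Finset.sum_sub_distrib]
  refine Finset.sum_congr rfl fun k _ => ?_
  by_cases hk : k ∈ V
  · simp [hu k hk]
  · rw [erasedDiagSub_mulVec_of_notMem hk, ← Complex.mul_conj, Pi.star_apply, RCLike.star_def]
    ring

lemma exists_ne_zero_of_det_erasedDiagSub_eq_zero (h : (erasedDiagSub A V y).det = 0) :
    ∃ v ≠ 0, star v ⬝ᵥ (A *ᵥ v) = ∑ k, y k * Complex.normSq (v k) := by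
  obtain ⟨v, hv, hv0⟩ := exists_mulVec_eq_zero_iff.2 h
  refine ⟨v, hv, ?_⟩
  rw [star_dotProduct_mulVec_eq_sum_sub (V := V) (fun k hk => ?_) y, hv0, dotProduct_zero, sub_zero]
  rw [← erasedDiagSub_mulVec_of_mem hk y v, hv0, Pi.zero_apply]

lemma det_erasedDiagSub_ne_zero_of_im_pos (hA : A.IsHermitian) (V : Finset σ)
    (hy : ∀ k, 0 < (y k).im) : (erasedDiagSub A V y).det ≠ 0 := by
  intro h
  obtain ⟨v, hv, hform⟩ := exists_ne_zero_of_det_erasedDiagSub_eq_zero h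
  obtain ⟨k, hk⟩ := ne_iff.1 hv
  have him : ∑ j, (y j).im * Complex.normSq (v j) = 0 := by
    simpa [hform, Complex.im_sum] using hA.im_star_dotProduct_mulVec_self v
  refine (Finset.sum_pos' (fun j _ => ?_) ⟨k, Finset.mem_univ k, ?_⟩).ne' him
  · exact mul_nonneg (hy j).le (Complex.normSq_nonneg _)
  · exact mul_pos (hy k) (Complex.normSq_pos.2 hk)

lemma det_erasedDiagSub_update (hk : k ∉ V) (y : σ → ℂ) (t : ℂ) :
    (erasedDiagSub A V (update y k t)).det
      = (erasedDiagSub A V (update y k 0)).det + t * (erasedDiagSub A (insert k V) y).det := by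
  simp only [erasedDiagSub_update_of_notMem hk, sub_eq_neg_add, det_updateRow_add,
    det_updateRow_smul, updateRow_erasedDiagSub, zero_mul, add_zero]

lemma coordDeriv_det_erasedDiagSub (hk : k ∉ V) :
    coordDeriv k (fun y => (erasedDiagSub A V y).det)
      = fun y => (erasedDiagSub A (insert k V) y).det := by
  funext y
  rw [coordDeriv_apply, det_erasedDiagSub_update hk y 1, one_mul, add_sub_cancel_left]

lemma iterDeriv_det_erasedDiagSub (V : Finset σ) :
    iterDeriv V (fun y => (erasedDiagSub A ∅ y).det) = fun y => (erasedDiagSub A V y).det := by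
  induction V using Finset.induction_on with
  | empty => rw [iterDeriv_empty, Module.End.one_apply]
  | insert k V hk ih => rw [iterDeriv_insert hk, ih, coordDeriv_det_erasedDiagSub hk]

lemma isMultiaffine_det_erasedDiagSub_empty :
    IsMultiaffine fun y => (erasedDiagSub A ∅ y).det := by
  intro y k t
  rw [coordDeriv_det_erasedDiagSub (Finset.notMem_empty k)]
  exact det_erasedDiagSub_update (Finset.notMem_empty k) y t

lemma isRealOnReals_det_erasedDiagSub_empty (hA : A.IsHermitian) :
    IsRealOnReals fun y => (erasedDiagSub A ∅ y).det := by
  intro x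
  have hdiag : (diagonal (Complex.ofReal ∘ x)).IsHermitian :=
    isHermitian_diagonal_iff.2 fun i => Complex.conj_ofReal _
  rw [← Complex.conj_eq_iff_im, ← RCLike.star_def, ← det_conjTranspose, erasedDiagSub_empty,
    (hdiag.sub hA).eq]
  simp only [erasedDiagSub_empty]

lemma det_erasedDiagSub_insert (hu : erasedDiagSub A V y *ᵥ u = Pi.single k 1) :
    (erasedDiagSub A (insert k V) y).det = u k * (erasedDiagSub A V y).det := by
  have h : (erasedDiagSub A V y).adjugate *ᵥ (erasedDiagSub A V y *ᵥ u)
      = (erasedDiagSub A V y).det • u := by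
    rw [mulVec_mulVec, adjugate_mul, smul_mulVec, one_mulVec]
  rw [hu, mulVec_single_one] at h
  rw [← updateRow_erasedDiagSub, ← adjugate_apply, mul_comm]
  exact congrFun h k

omit [DecidableEq σ] in
lemma star_dotProduct_self_eq_sum_normSq (u : σ → ℂ) :
    star u ⬝ᵥ u = ((∑ i, Complex.normSq (u i) : ℝ) : ℂ) := by
  simp [dotProduct, Complex.normSq_eq_conj_mul_self]

lemma re_star_dotProduct_one_sub_mulVec (A : Matrix σ σ ℂ) (u v : σ → ℂ) :
    (star u ⬝ᵥ ((1 - A) *ᵥ v)).re = (star u ⬝ᵥ v).re - (star u ⬝ᵥ (A *ᵥ v)).re := by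
  rw [sub_mulVec, one_mulVec, dotProduct_sub, Complex.sub_re]

lemma re_star_dotProduct_mulVec_le_sum_normSq (hA1 : (1 - A).PosSemidef) (u : σ → ℂ) :
    (star u ⬝ᵥ (A *ᵥ u)).re ≤ ∑ i, Complex.normSq (u i) := by
  have h : 0 ≤ (star u ⬝ᵥ ((1 - A) *ᵥ u)).re := hA1.re_dotProduct_nonneg u
  rw [re_star_dotProduct_one_sub_mulVec, star_dotProduct_self_eq_sum_normSq,
    Complex.ofReal_re] at h
  exact sub_nonneg.1 h

lemma two_mul_re_star_dotProduct_mulVec_single_le (hA : A.PosSemidef) {s : ℝ} (hs : 0 < s)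
    (u : σ → ℂ) (k : σ) :
    2 * (star u ⬝ᵥ (A *ᵥ Pi.single k 1)).re
      ≤ s * (star u ⬝ᵥ (A *ᵥ u)).re + (A k k).re / s := by
  set e : σ → ℂ := Pi.single k 1
  have hsymm : (star e ⬝ᵥ (A *ᵥ u)).re = (star u ⬝ᵥ (A *ᵥ e)).re := by
    rw [← Complex.conj_re, ← RCLike.star_def, star_dotProduct, star_mulVec,
      hA.isHermitian.eq, ← dotProduct_mulVec, star_star]
  have hdiag : star e ⬝ᵥ (A *ᵥ e) = A k k := by simp [e]
  have hsq : 0 ≤ (star ((s : ℂ) • u - e) ⬝ᵥ (A *ᵥ ((s : ℂ) • u - e))).re :=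
    hA.re_dotProduct_nonneg _
  simp only [mulVec_sub, mulVec_smul, star_sub, star_smul, sub_dotProduct, dotProduct_sub,
    smul_dotProduct, dotProduct_smul, smul_eq_mul, RCLike.star_def, Complex.conj_ofReal,
    Complex.sub_re, Complex.re_ofReal_mul, hsymm, hdiag] at hsq
  rw [← sub_nonneg]
  refine (div_nonneg hsq hs.le).trans_eq ?_
  field_simp
  ring

lemma re_apply_le_of_mul_sum_normSq_le (hA : A.PosSemidef) (hA1 : (1 - A).PosSemidef) {b : ℝ}
    (hb : 1 < b)
    (h : b * ∑ i, Complex.normSq (u i) ≤ (star u ⬝ᵥ (A *ᵥ u)).re + (u k).re) :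
    (u k).re ≤ (1 - (A k k).re) / b + (A k k).re / (b - 1) := by
  have hA' := two_mul_re_star_dotProduct_mulVec_single_le hA (sub_pos.2 hb) u k
  have hA1' := two_mul_re_star_dotProduct_mulVec_single_le hA1 (zero_lt_one.trans hb) u k
  rw [re_star_dotProduct_one_sub_mulVec, re_star_dotProduct_one_sub_mulVec,
    star_dotProduct_self_eq_sum_normSq, Complex.ofReal_re, dotProduct_single_one, Pi.star_apply,
    RCLike.star_def, Complex.conj_re, Matrix.sub_apply, one_apply_eq, Complex.sub_re,
    Complex.one_re] at hA1'
  linarith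

variable {b : ℝ} {x : σ → ℝ}

lemma re_star_dotProduct_mulVec_lt (hA1 : (1 - A).PosSemidef) (hx : ∀ i, 1 < x i) (hu : u ≠ 0) :
    (star u ⬝ᵥ (A *ᵥ u)).re < ∑ i, x i * Complex.normSq (u i) := by
  obtain ⟨k, hk⟩ := ne_iff.1 hu
  refine (re_star_dotProduct_mulVec_le_sum_normSq hA1 u).trans_lt ?_
  refine Finset.sum_lt_sum (fun i _ => ?_) ⟨k, Finset.mem_univ k, ?_⟩
  · exact le_mul_of_one_le_left (Complex.normSq_nonneg _) (hx i).le
  · exact lt_mul_of_one_lt_left (Complex.normSq_pos.2 hk) (hx k)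

lemma det_erasedDiagSub_ne_zero_of_one_lt (hA1 : (1 - A).PosSemidef) (V : Finset σ)
    (hx : ∀ i, 1 < x i) : (erasedDiagSub A V (Complex.ofReal ∘ x)).det ≠ 0 := by
  intro h
  obtain ⟨v, hv, hform⟩ := exists_ne_zero_of_det_erasedDiagSub_eq_zero h
  refine (re_star_dotProduct_mulVec_lt hA1 hx hv).ne ?_
  simp [hform]

lemma re_star_dotProduct_mulVec_add_of_mulVec_eq_single (hA : A.IsHermitian) (hk : k ∉ V)
    (hu : erasedDiagSub A V (Complex.ofReal ∘ x) *ᵥ u = Pi.single k 1) :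
    (u k).im = 0 ∧
      (star u ⬝ᵥ (A *ᵥ u)).re + (u k).re = ∑ i, x i * Complex.normSq (u i) := by
  have hzero : ∀ i ∈ V, u i = 0 := fun i hi => by
    rw [← erasedDiagSub_mulVec_of_mem hi (Complex.ofReal ∘ x) u, hu,
      Pi.single_eq_of_ne (ne_of_mem_of_not_mem hi hk)]
  have hform := star_dotProduct_mulVec_eq_sum_sub (A := A) hzero (Complex.ofReal ∘ x)
  rw [hu, dotProduct_single_one, Pi.star_apply, RCLike.star_def] at hform
  constructor
  · have him : (star u ⬝ᵥ (A *ᵥ u)).im = 0 := hA.im_star_dotProduct_mulVec_self u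
    simpa [hform] using him
  · simp [hform]

/-- By Cramer's rule the ratio of the two determinants is a diagonal entry of `(diag x - A)⁻¹`
compressed to the complement of `V`. -/
lemma exists_det_erasedDiagSub_insert_eq_mul (hA : A.PosSemidef) (hA1 : (1 - A).PosSemidef)
    (hb : 1 < b) (hx : ∀ i, b ≤ x i) (hk : k ∉ V) :
    ∃ ρ : ℝ, 0 < ρ ∧ ρ ≤ (1 - (A k k).re) / b + (A k k).re / (b - 1) ∧
      (erasedDiagSub A (insert k V) (Complex.ofReal ∘ x)).det
        = ρ * (erasedDiagSub A V (Complex.ofReal ∘ x)).det := by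
  have hx1 : ∀ i, 1 < x i := fun i => hb.trans_le (hx i)
  obtain ⟨u, hu⟩ := mulVec_surjective_iff_isUnit.2 ((isUnit_iff_isUnit_det _).2
    (det_erasedDiagSub_ne_zero_of_one_lt hA1 V hx1).isUnit) (Pi.single k 1)
  have hu0 : u ≠ 0 := by
    rintro rfl
    simpa using congrFun hu k
  obtain ⟨him, hre⟩ := re_star_dotProduct_mulVec_add_of_mulVec_eq_single hA.isHermitian hk hu
  refine ⟨(u k).re, ?_, re_apply_le_of_mul_sum_normSq_le hA hA1 hb ?_, ?_⟩
  · linarith [re_star_dotProduct_mulVec_lt hA1 hx1 hu0]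
  · rw [hre, Finset.mul_sum]
    exact Finset.sum_le_sum fun i _ => mul_le_mul_of_nonneg_right (hx i) (Complex.normSq_nonneg _)
  · rw [Complex.conj_eq_iff_re.1 (Complex.conj_eq_iff_im.2 him), det_erasedDiagSub_insert hu]

lemma det_erasedDiagSub_re_pos (hA : A.PosSemidef) (hA1 : (1 - A).PosSemidef) (hb : 1 < b)
    (hx : ∀ i, b ≤ x i) (V : Finset σ) :
    0 < (erasedDiagSub A V (Complex.ofReal ∘ x)).det.re := by
  suffices h : ∀ S : Finset σ, 0 < (erasedDiagSub A Sᶜ (Complex.ofReal ∘ x)).det.re by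
    simpa only [compl_compl] using h Vᶜ
  intro S
  induction S using Finset.induction_on with
  | empty => simp [erasedDiagSub_univ]
  | insert k S hk ih =>
    have hk' : k ∉ (insert k S)ᶜ := by simp
    obtain ⟨ρ, hρ, -, hdet⟩ := exists_det_erasedDiagSub_insert_eq_mul hA hA1 hb hx hk'
    rw [Finset.insert_compl_insert hk] at hdet
    rw [hdet, Complex.re_ofReal_mul] at ih
    exact pos_of_mul_pos_right ih hρ.le

lemma isStableFamily_det_erasedDiagSub (hA : A.PosSemidef) (hA1 : (1 - A).PosSemidef) :
    IsStableFamily Finset.univ fun y => (erasedDiagSub A ∅ y).det where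
  isMultiaffine := isMultiaffine_det_erasedDiagSub_empty
  isRealOnReals := isRealOnReals_det_erasedDiagSub_empty hA.isHermitian
  isStable L _ := by
    rw [iterDeriv_det_erasedDiagSub]
    exact fun y => det_erasedDiagSub_ne_zero_of_im_pos hA.isHermitian L
  eventually_pos L _ := by
    filter_upwards [Filter.eventually_ge_atTop 2] with x hx
    rw [iterDeriv_det_erasedDiagSub]
    exact det_erasedDiagSub_re_pos hA hA1 one_lt_two (fun _ => hx) L

lemma hasBarrier_det_erasedDiagSub (hA : A.PosSemidef) (hA1 : (1 - A).PosSemidef) (hb : 1 < b)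
    {Φ : ℝ} (hΦ : ∀ k, (1 - (A k k).re) / b + (A k k).re / (b - 1) ≤ Φ) (d : ℝ) :
    HasBarrier Φ b d Finset.univ fun y => (erasedDiagSub A ∅ y).det := by
  intro L _ x hx _
  have hx' : ∀ k, b ≤ x k := fun k => hx k (Finset.mem_univ k)
  have hpos := det_erasedDiagSub_re_pos hA hA1 hb hx' L
  rw [iterDeriv_det_erasedDiagSub]
  refine ⟨hpos, fun k _ => ?_⟩
  by_cases hk : k ∈ L
  · obtain ⟨ρ, hρ, hρΦ, -⟩ :=
      exists_det_erasedDiagSub_insert_eq_mul hA hA1 hb hx' (Finset.notMem_empty k)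
    rw [← iterDeriv_det_erasedDiagSub, ← coordDeriv_iterDeriv_erase hk,
      coordDeriv_coordDeriv_self, coordDeriv_iterDeriv_erase hk, iterDeriv_det_erasedDiagSub]
    exact mul_nonneg (hρ.le.trans (hρΦ.trans (hΦ k))) hpos.le
  · obtain ⟨ρ, -, hρΦ, hdet⟩ := exists_det_erasedDiagSub_insert_eq_mul hA hA1 hb hx' hk
    simp only [coordDeriv_det_erasedDiagSub hk, hdet, Complex.re_ofReal_mul]
    exact mul_le_mul_of_nonneg_right (hρΦ.trans (hΦ k)) hpos.le

variable {ι : Type*} [Fintype ι] {c : ι → σ}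

omit [DecidableEq σ] in
lemma mulVec_extend_zero (hc : Injective c) (A : Matrix σ σ ℂ) (v : ι → ℂ) (i : ι) :
    (A *ᵥ extend c v 0) (c i) = (A.submatrix c c *ᵥ v) i := by
  refine (Fintype.sum_of_injective c hc _ _ (fun p hp => ?_) fun j => ?_).symm
  · rw [extend_apply' _ _ _ hp, Pi.zero_apply, mul_zero]
  · simp only [submatrix_apply, hc.extend_apply]

lemma det_erasedDiagSub_eq_zero_of_submatrix_mulVec_eq_smul (hc : Injective c)
    (hV : ∀ p, p ∈ V ↔ p ∉ Set.range c) {t : ℂ} {v : ι → ℂ} (hv : v ≠ 0)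
    (h : A.submatrix c c *ᵥ v = t • v) : (erasedDiagSub A V fun _ => t).det = 0 := by
  refine exists_mulVec_eq_zero_iff.1 ⟨extend c v 0, fun h0 => hv ?_, ?_⟩
  · rw [← extend_comp hc v 0, h0, Pi.zero_comp]
  funext p
  by_cases hp : p ∈ V
  · rw [erasedDiagSub_mulVec_of_mem hp, extend_apply' _ _ _ ((hV p).1 hp)]
  · obtain ⟨i, rfl⟩ := not_not.1 (mt (hV p).2 hp)
    rw [erasedDiagSub_mulVec_of_notMem hp, mulVec_extend_zero hc, h, hc.extend_apply]
    simp

lemma posSemidef_smul_one_sub_of_eigenvalue_le (hA : A.IsHermitian) {M : ℝ}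
    (h : ∀ (t : ℝ) (v : σ → ℂ), v ≠ 0 → A *ᵥ v = (t : ℂ) • v → t ≤ M) :
    ((M : ℂ) • 1 - A).PosSemidef := by
  have hN : ((M : ℂ) • 1 - A).IsHermitian :=
    (isHermitian_one.smul (Complex.conj_ofReal M)).sub hA
  refine hN.posSemidef_iff_eigenvalues_nonneg.2 fun i => ?_
  have hv0 : (hN.eigenvectorBasis i).ofLp ≠ 0 := fun h0 =>
    hN.eigenvectorBasis.orthonormal.ne_zero i (WithLp.ofLp_injective 2 h0)
  have hv := hN.mulVec_eigenvectorBasis i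
  rw [sub_mulVec, smul_mulVec, one_mulVec, sub_eq_iff_eq_add, ← sub_eq_iff_eq_add'] at hv
  have := h (M - hN.eigenvalues i) _ hv0 (by rw [← hv, Complex.ofReal_sub, sub_smul]; rfl)
  exact sub_le_self_iff M |>.1 this

omit [Fintype ι] in
theorem exists_section_posSemidef_smul_one_sub_submatrix [Finite ι] [DecidableEq ι]
    (hA : A.PosSemidef) (hA1 : (1 - A).PosSemidef) (hb : 1 < b) {Φ d : ℝ}
    (hΦ : ∀ k, (1 - (A k k).re) / b + (A k k).re / (b - 1) ≤ Φ) {r : ℕ} (hr : r ≠ 0)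
    (hd : (r : ℝ) ^ 2 * Φ * d = (r - 1) ^ 2) {π : σ → ι}
    (hπ : ∀ i, (Finset.univ.filter fun p => π p = i).card = r) :
    ∃ c : ι → σ, (∀ i, π (c i) = i) ∧
      (((b - d : ℝ) : ℂ) • 1 - A.submatrix c c).PosSemidef := by
  have := Fintype.ofFinite ι
  set B : ι → Finset σ := fun i => Finset.univ.filter fun p => π p = i
  have hdisj : ((Finset.univ : Finset ι) : Set ι).PairwiseDisjoint B :=
    fun i _ j _ hij => Finset.disjoint_left.2 fun p hi hj => hij <| by
      rw [← (Finset.mem_filter.1 hi).2, (Finset.mem_filter.1 hj).2]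
  have hne : ∀ i, (B i).Nonempty := fun i => Finset.card_ne_zero.1 ((hπ i).trans_ne hr)
  have huniv : Finset.univ.biUnion B = Finset.univ := by
    ext p
    simp [B]
  obtain ⟨c, hcB, hc⟩ := IsStableFamily.exists_iterDeriv_biUnion_erase_pos hdisj hne
    (fun i _ => by rw [hπ i, hd])
    (huniv ▸ isStableFamily_det_erasedDiagSub hA hA1)
    (huniv ▸ hasBarrier_det_erasedDiagSub hA hA1 hb hΦ d)
  simp only [iterDeriv_det_erasedDiagSub] at hc
  have hsec : ∀ i, π (c i) = i := fun i => (Finset.mem_filter.1 (hcB i)).2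
  have hcinj : Injective c := LeftInverse.injective hsec
  refine ⟨c, hsec, posSemidef_smul_one_sub_of_eigenvalue_le (hA.isHermitian.submatrix c)
    fun t v hv h => not_lt.1 fun ht => (hc t ht.le).ne' ?_⟩
  rw [det_erasedDiagSub_eq_zero_of_submatrix_mulVec_eq_smul hcinj (fun p => ?_) hv h,
    Complex.zero_re]
  simp only [B, Finset.mem_biUnion, Finset.mem_erase, Finset.mem_filter_univ, Set.mem_range,
    Finset.mem_univ, true_and, exists_eq_right']
  refine ⟨?_, fun hp => fun h => hp ⟨_, h.symm⟩⟩
  rintro hp ⟨i, rfl⟩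
  exact hp (by rw [hsec])

end ErasedDet

section Paving

open scoped Kronecker

variable {ι κ : Type*} [DecidableEq κ]

/-- The pinching of `A` along a coloring `c` of its indices: the entries between indices of
different colors are replaced by zero, which leaves `∑ j, P_{X j} A P_{X j}`, where `X j` is the
set of indices of color `j`. -/
def pinching (c : ι → κ) (A : Matrix ι ι ℂ) : Matrix ι ι ℂ :=
  of fun i j => if c i = c j then A i j else 0

variable [Finite ι] [DecidableEq ι] [Fintype κ] {A : Matrix ι ι ℂ}

/-- A section `i ↦ (i, c i)` of `ι × κ → ι` cuts the pinching along `c` out of `A ⊗ 1`. -/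
lemma exists_coloring_posSemidef_smul_one_sub_pinching [Nonempty κ] (hA : A.PosSemidef)
    (hA1 : (1 - A).PosSemidef) {b : ℝ} (hb : 1 < b) {Φ d : ℝ}
    (hΦ : ∀ i, (1 - (A i i).re) / b + (A i i).re / (b - 1) ≤ Φ)
    (hd : (Fintype.card κ : ℝ) ^ 2 * Φ * d = (Fintype.card κ - 1) ^ 2) :
    ∃ c : ι → κ, (((b - d : ℝ) : ℂ) • 1 - pinching c A).PosSemidef := by
  have := Fintype.ofFinite ι
  have hcompl : 1 - A ⊗ₖ (1 : Matrix κ κ ℂ) = (1 - A) ⊗ₖ 1 := by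
    rw [sub_eq_iff_eq_add, ← add_kronecker, sub_add_cancel, one_kronecker_one]
  obtain ⟨c, hc, hpsd⟩ := exists_section_posSemidef_smul_one_sub_submatrix
    (A := A ⊗ₖ (1 : Matrix κ κ ℂ)) (π := Prod.fst) (hA.kronecker .one)
    (hcompl ▸ hA1.kronecker .one) hb (fun p => by simpa using hΦ p.1) Fintype.card_ne_zero hd
    fun i => by
      rw [← Finset.card_univ (α := κ),
        ← Finset.card_image_of_injective Finset.univ (Prod.mk_right_injective i)]
      congr 1
      ext ⟨j, k⟩
      simp [eq_comm]
  refine ⟨fun i => (c i).2, ?_⟩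
  convert hpsd using 2
  ext i j
  simp [pinching, hc, one_apply]

section Parameters

variable {r δ : ℝ}

lemma exists_gt_mul_eq_mul_sqrt_mul_sqrt (hr : 1 < r) (hδ0 : 0 < δ) (hδ : δ * r ^ 2 < (r - 1) ^ 2) :
    ∃ c, δ < c ∧ (2 * r - 1) * c = (r - 1) * √((2 * r - 1) * (1 - δ)) * √δ ∧
      (2 * r - 1) * c ^ 2 = (r - 1) ^ 2 * (δ * (1 - δ)) := by
  have hr1 : 0 < r - 1 := sub_pos.2 hr
  have hm : 0 < 2 * r - 1 := by linarith
  have hδ1 : 0 < 1 - δ := by nlinarith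
  have hP : √((2 * r - 1) * (1 - δ)) ^ 2 = (2 * r - 1) * (1 - δ) := Real.sq_sqrt (by positivity)
  have hQ : √δ ^ 2 = δ := Real.sq_sqrt hδ0.le
  set c := (r - 1) * √((2 * r - 1) * (1 - δ)) * √δ / (2 * r - 1) with hc
  have hcsq : (2 * r - 1) * c ^ 2 = (r - 1) ^ 2 * (δ * (1 - δ)) := by
    rw [hc, div_pow, mul_pow, mul_pow, hP, hQ]
    field_simp
  refine ⟨c, lt_of_pow_lt_pow_left₀ 2 (by positivity) ?_, mul_div_cancel₀ _ hm.ne', hcsq⟩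
  refine lt_of_mul_lt_mul_left ?_ hm.le
  rw [hcsq]
  nlinarith

lemma exists_barrier_parameters (hr : 1 < r) (hδ0 : 0 < δ) (hδ : δ < ((r - 1) / r) ^ 2) :
    ∃ b d : ℝ, 1 < b ∧ r ^ 2 * ((1 - δ) / b + δ / (b - 1)) * d = (r - 1) ^ 2 ∧
      b - d = 1 / r ^ 2 * (√((2 * r - 1) * (1 - δ)) + (r - 1) * √δ) ^ 2 := by
  have hr0 : 0 < r := zero_lt_one.trans hr
  have hδr : δ * r ^ 2 < (r - 1) ^ 2 := by
    rwa [div_pow, lt_div_iff₀ (by positivity)] at hδ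
  have hδ1 : 0 < 1 - δ := by nlinarith
  -- `b = 1 - δ + c` minimizes the bound `b - d`.
  obtain ⟨c, hδc, hc, hcsq⟩ := exists_gt_mul_eq_mul_sqrt_mul_sqrt hr hδ0 hδr
  refine ⟨1 - δ + c, (c * ((r - 1) ^ 2 - (2 * r - 1)) + (r - 1) ^ 2 * (1 - 2 * δ)) / r ^ 2,
    by linarith, ?_, ?_⟩
  · have hc0 : 0 < c := hδ0.trans hδc
    have hcδ : c - δ ≠ 0 := (sub_pos.2 hδc).ne'
    have hΦ : (1 - δ) / (1 - δ + c) + δ / (1 - δ + c - 1) = c / ((1 - δ + c) * (c - δ)) := by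
      rw [show 1 - δ + c - 1 = c - δ by ring]
      field_simp
      ring
    rw [hΦ]
    field_simp
    linear_combination -hcsq
  · have hP : √((2 * r - 1) * (1 - δ)) ^ 2 = (2 * r - 1) * (1 - δ) :=
      Real.sq_sqrt (mul_nonneg (by linarith) hδ1.le)
    have hQ : √δ ^ 2 = δ := Real.sq_sqrt hδ0.le
    set P := √((2 * r - 1) * (1 - δ))
    field_simp
    linear_combination 2 * hc - hP - (r - 1) ^ 2 * hQ

lemma paving_bound_eq_one (hr : 1 ≤ r) :
    1 / r ^ 2 * (√((2 * r - 1) * (1 - ((r - 1) / r) ^ 2)) + (r - 1) * √(((r - 1) / r) ^ 2)) ^ 2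
      = 1 := by
  have hr0 : 0 < r := zero_lt_one.trans_le hr
  have hP : (2 * r - 1) * (1 - ((r - 1) / r) ^ 2) = ((2 * r - 1) / r) ^ 2 := by
    field_simp
    ring
  rw [hP, Real.sqrt_sq (div_nonneg (by linarith) hr0.le),
    Real.sqrt_sq (div_nonneg (sub_nonneg.2 hr) hr0.le)]
  field_simp
  ring

lemma div_add_div_sub_one_mono {a b : ℝ} (ha : a ≤ δ) (hb : 1 < b) :
    (1 - a) / b + a / (b - 1) ≤ (1 - δ) / b + δ / (b - 1) := by
  have hinv : b⁻¹ ≤ (b - 1)⁻¹ := inv_anti₀ (sub_pos.2 hb) (sub_le_self b zero_le_one)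
  simp only [div_eq_mul_inv]
  nlinarith

end Parameters

theorem four_paving_estimate_general [Nonempty κ] {δ : ℝ} (hδ0 : 0 ≤ δ)
    (hδ1 : δ ≤ ((Fintype.card κ - 1) / Fintype.card κ) ^ 2) (hA : A.PosSemidef)
    (hA1 : (1 - A).PosSemidef) (hdiag : ∀ i, (A i i).re ≤ δ) :
    ∃ c : ι → κ, (((1 / (Fintype.card κ : ℝ) ^ 2 *
        (√((2 * Fintype.card κ - 1) * (1 - δ)) + (Fintype.card κ - 1) * √δ) ^ 2 : ℝ) : ℂ) • 1
      - pinching c A).PosSemidef := by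
  have hr : (1 : ℝ) ≤ Fintype.card κ := by exact_mod_cast Fintype.card_pos
  set r := (Fintype.card κ : ℝ)
  let c₀ : ι → κ := fun _ => Classical.arbitrary κ
  have hc₀ : pinching c₀ A = A := by
    ext i j
    simp [pinching, c₀]
  rcases hδ1.eq_or_lt with rfl | hδ1
  · refine ⟨c₀, ?_⟩
    rwa [paving_bound_eq_one hr, hc₀, Complex.ofReal_one, one_smul]
  rcases hδ0.eq_or_lt with rfl | hδ0
  · have := Fintype.ofFinite ι
    have hA0 : A = 0 := by
      refine hA.trace_eq_zero_iff.1 (le_antisymm ?_ hA.trace_nonneg)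
      refine Finset.sum_nonpos fun i _ => ?_
      exact Complex.nonpos_iff.2 ⟨hdiag i, Complex.conj_eq_iff_im.1 (hA.isHermitian.apply i i)⟩
    refine ⟨c₀, ?_⟩
    rw [hc₀, hA0, sub_zero]
    exact PosSemidef.one.smul (by positivity)
  · have hr1 : 1 < r := hr.lt_of_ne fun h => by
      norm_num [← h] at hδ1
      exact hδ1.not_ge hδ0.le
    obtain ⟨b, d, hb, hd, hbd⟩ := exists_barrier_parameters hr1 hδ0 hδ1
    rw [← hbd]
    exact exists_coloring_posSemidef_smul_one_sub_pinching hA hA1 hb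
      (fun i => div_add_div_sub_one_mono (hdiag i) hb) hd

end Paving

lemma sum_proj_mul_mul_proj_eq_pinching {n : ℕ} {κ : Type*} [Fintype κ] [DecidableEq κ]
    (c : Fin n → κ) (A : Matrix (Fin n) (Fin n) ℂ) :
    ∑ j, proj {i | c i = j} * A * proj {i | c i = j} = pinching c A := by
  ext i k
  simp [proj, pinching, Matrix.sum_apply, diagonal_mul, mul_diagonal, eq_comm]

lemma exists_partition_of_coloring {n : ℕ} {A : Matrix (Fin n) (Fin n) ℂ} {M : ℂ}
    (h : ∃ c : Fin n → Fin 4, (M • 1 - pinching c A).PosSemidef) :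
    ∃ X₁ X₂ X₃ X₄ : Finset (Fin n),
      Disjoint X₁ X₂ ∧ Disjoint X₁ X₃ ∧ Disjoint X₁ X₄ ∧
      Disjoint X₂ X₃ ∧ Disjoint X₂ X₄ ∧ Disjoint X₃ X₄ ∧
      X₁ ∪ X₂ ∪ X₃ ∪ X₄ = Finset.univ ∧
      (M • (1 : Matrix (Fin n) (Fin n) ℂ)
        - (proj X₁ * A * proj X₁ + proj X₂ * A * proj X₂ +
            proj X₃ * A * proj X₃ + proj X₄ * A * proj X₄)).PosSemidef := by
  obtain ⟨c, hc⟩ := h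
  have hdisj : ∀ j k : Fin 4, j ≠ k →
      Disjoint (Finset.univ.filter fun i => c i = j) (Finset.univ.filter fun i => c i = k) :=
    fun j k hjk => Finset.disjoint_filter.2 fun i _ hj hk => hjk (hj.symm.trans hk)
  refine ⟨_, _, _, _, hdisj 0 1 (by decide), hdisj 0 2 (by decide), hdisj 0 3 (by decide),
    hdisj 1 2 (by decide), hdisj 1 3 (by decide), hdisj 2 3 (by decide), ?_, ?_⟩
  · ext i
    simp only [Finset.mem_union, Finset.mem_filter_univ, Finset.mem_univ, iff_true]
    generalize c i = j
    fin_cases j <;> decide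
  · rwa [← Fin.sum_univ_four fun j => proj {i | c i = j} * A * proj {i | c i = j},
      sum_proj_mul_mul_proj_eq_pinching]

lemma paving_bound_half :
    1 / 16 * (√(7 * (1 - 1 / 2)) + 3 * √(1 / 2)) ^ 2 = (3 + √7) ^ 2 / 32 := by
  have hP : √(7 * (1 - 1 / 2)) = √7 * √(1 / 2) := by
    rw [← Real.sqrt_mul (by norm_num)]
    norm_num
  have hhalf : √(1 / 2) ^ 2 = (1 / 2 : ℝ) := Real.sq_sqrt (by norm_num)
  rw [hP]
  linear_combination 1 / 16 * (√7 + 3) ^ 2 * hhalf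

/-- Any positive contraction with diagonal entries at most `δ ≤ 9/16` admits a four-paving
whose largest eigenvalue is at most `(1/16)(√(7(1-δ)) + 3√δ)²`; for `δ = 1/2` this bound
equals `(3+√7)²/32`. -/
theorem four_paving_estimate {n : ℕ} (δ : ℝ) (hδ0 : 0 ≤ δ) (hδ1 : δ ≤ 9/16)
    (A : Matrix (Fin n) (Fin n) ℂ)
    (hA : A.PosSemidef) (hA1 : ((1 : Matrix (Fin n) (Fin n) ℂ) - A).PosSemidef)
    (hdiag : ∀ i, (A i i).re ≤ δ) :
    (∃ X₁ X₂ X₃ X₄ : Finset (Fin n),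
      Disjoint X₁ X₂ ∧ Disjoint X₁ X₃ ∧ Disjoint X₁ X₄ ∧
      Disjoint X₂ X₃ ∧ Disjoint X₂ X₄ ∧ Disjoint X₃ X₄ ∧
      X₁ ∪ X₂ ∪ X₃ ∪ X₄ = Finset.univ ∧
      ((((1/16 * (Real.sqrt (7*(1-δ)) + 3 * Real.sqrt δ)^2 : ℝ) : ℂ) •
            (1 : Matrix (Fin n) (Fin n) ℂ)
          - (proj X₁ * A * proj X₁ + proj X₂ * A * proj X₂ +
              proj X₃ * A * proj X₃ + proj X₄ * A * proj X₄)).PosSemidef)) ∧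
    (1/16 * (Real.sqrt (7*(1-(1/2 : ℝ))) + 3 * Real.sqrt (1/2))^2
      = (3 + Real.sqrt 7)^2/32) := by
  refine ⟨exists_partition_of_coloring ?_, paving_bound_half⟩
  convert four_paving_estimate_general (κ := Fin 4) hδ0 _ hA hA1 hdiag using 2 <;> norm_num [hδ1]
end

section
/- Let μ be a probability distribution on the subsets of {1,…,n} (μ(S) ≥ 0 for each S ⊆ {1,…,n} and Σ_S μ(S) = 1) that is strongly Rayleigh, i.e. its generating polynomial P_μ(z₁,…,z_n) = Σ_S μ(S)·∏_{i∈S} z_i is real stable. Let A be an n×n complex Hermitian matrix. Then: (i) the polynomial q(x) := Σ_{S ⊆ {1,…,n}} μ(S)·χ[A_S](x) has all of its complex roots real; (ii) q(x) = P_μ(∂_{z₁},…,∂_{z_n}) det(Z − A), evaluated at z₁ = ⋯ = z_n = x, where Z = diag(z₁,…,z_n); and (iii) if q is nonconstant, there exists S with μ(S) > 0 such that every root of χ[A_S] is at most the largest root of q. -/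
open Polynomial Matrix

/-- A polynomial with real coefficients is real stable if it has no zero all of whose
coordinates have strictly positive imaginary part. -/
def RealStable {n : ℕ} (p : MvPolynomial (Fin n) ℝ) : Prop :=
  ∀ z : Fin n → ℂ, (∀ k, 0 < (z k).im) → MvPolynomial.aeval z p ≠ 0

/-- The principal submatrix of `A` obtained by deleting the rows and columns indexed by `S`. -/
def subAway {n : ℕ} (A : Matrix (Fin n) (Fin n) ℂ) (S : Finset (Fin n)) :
    Matrix ↥(Sᶜ) ↥(Sᶜ) ℂ :=
  A.submatrix (fun x : ↥(Sᶜ) => (x : Fin n)) (fun x : ↥(Sᶜ) => (x : Fin n))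

/-- The formal partial derivative `∂/∂zᵢ` as a linear endomorphism of `ℂ[z₁,…,z_n]`. -/
noncomputable def pd {n : ℕ} (i : Fin n) :
    MvPolynomial (Fin n) ℂ →ₗ[ℂ] MvPolynomial (Fin n) ℂ :=
  (MvPolynomial.pderiv i).toLinearMap

/-- The differential operator `Π_{i ∈ S} ∂_{zᵢ}`. -/
noncomputable def pdS {n : ℕ} (S : Finset (Fin n)) :
    MvPolynomial (Fin n) ℂ →ₗ[ℂ] MvPolynomial (Fin n) ℂ :=
  ((S.sort (· ≤ ·)).map pd).prod

/-- The matrix `Z - A`, where `Z = diag(z₁,…,z_n)` is the diagonal matrix of indeterminates. -/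
noncomputable def ZsubA {n : ℕ} (A : Matrix (Fin n) (Fin n) ℂ) :
    Matrix (Fin n) (Fin n) (MvPolynomial (Fin n) ℂ) :=
  Matrix.of fun i j => (if i = j then MvPolynomial.X i else 0) - MvPolynomial.C (A i j)

/-- The expected characteristic polynomial `Σ_S μ(S) χ[A_S]` over a strongly Rayleigh
distribution `μ`. -/
noncomputable def expCharpoly {n : ℕ} (μ : Finset (Fin n) → ℝ)
    (A : Matrix (Fin n) (Fin n) ℂ) : Polynomial ℂ :=
  ∑ S : Finset (Fin n), Polynomial.C ((μ S : ℝ) : ℂ) * (subAway A S).charpoly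

/-!
For (ii), the determinant of `Z - A` is affine in each `zᵢ`, and differentiating it in `zᵢ`
replaces the `i`-th row by a unit vector, so `∂^S det (Z - A)` is the principal minor on the
complement of `S`.

For (i), `∑ S, μ S * χ[A_S] z` pairs the coefficients of `P_μ` with those of the multiaffine
polynomial `u ↦ det (diag u + z - A)`. When `0 < z.im` the latter does not vanish on the closed
upper half-planes, while `P_μ`, translated by `-iδ`, does not vanish on the closed lower ones. A
Lieb–Sokal contraction, one variable at a time, shows that the pairing is nonzero, and `δ → 0`
removes the translation.

For (iii), rescaling variables in `P_μ` keeps it stable, so the mixture stays real-rooted when `μ`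
is tilted by external fields. Split the mixture according to whether `i ∈ S`: all positive
combinations of the two parts are real-rooted. If the mixture is positive on `[a, ∞)`, one of the
parts is positive at `a`, and because it is joined to the mixture by real-rooted polynomials it is
positive on all of `[a, ∞)`. Descending through all `i` yields a single `χ[A_S]` without roots in
`[a, ∞)`.
-/

section RealRootedness

open Filter Set Topology

/-- A univariate complex polynomial is stable if it has no zero in the open upper half-plane. For
the image of a real polynomial this is real-rootedness. -/
def UpperStable (p : ℂ[X]) : Prop := ∀ z : ℂ, 0 < z.im → p.eval z ≠ 0

namespace UpperStable

lemma im_le_zero_of_mem_roots {p : ℂ[X]} (hp : UpperStable p) {r : ℂ} (hr : r ∈ p.roots) :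
    r.im ≤ 0 :=
  not_lt.1 fun h => hp r h (isRoot_of_mem_roots hr)

lemma norm_eval_le {p : ℂ[X]} (hp : UpperStable p) {w z : ℂ} (hre : w.re = z.re)
    (hw : 0 ≤ w.im) (hwz : w.im ≤ z.im) : ‖p.eval w‖ ≤ ‖p.eval z‖ := by
  have norm_eval (v : ℂ) :
      ‖p.eval v‖ = ‖p.leadingCoeff‖ * (p.roots.map fun r => ‖v - r‖).prod := by
    rw [(IsAlgClosed.splits p).eval_eq_prod_roots, norm_mul, ← normHom_apply (Multiset.prod _),
      map_multiset_prod, Multiset.map_map]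
    rfl
  rw [norm_eval, norm_eval]
  gcongr
  refine Multiset.prod_map_le_prod_map₀ _ _ (fun _ _ => norm_nonneg _) fun r hr => ?_
  have hrim := hp.im_le_zero_of_mem_roots hr
  rw [Complex.norm_def, Complex.norm_def, Complex.normSq_apply, Complex.normSq_apply]
  simp only [Complex.sub_re, Complex.sub_im, hre]
  gcongr <;> linarith

/- The monotonicity of `τ ↦ |p (x + iτ)|` for `τ ≥ 0` survives pointwise limits, so a zero `x + iy`
of the limit makes it vanish on the whole segment below it; this replaces Hurwitz's theorem. -/
lemma of_tendsto {α : Type*} {l : Filter α} [l.NeBot] {F : α → ℂ[X]} {p : ℂ[X]} (hp : p ≠ 0)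
    (hF : ∀ᶠ t in l, UpperStable (F t))
    (hlim : ∀ z, Tendsto (fun t => (F t).eval z) l (𝓝 (p.eval z))) : UpperStable p := by
  intro z hz hroot
  have vanish : ∀ τ ∈ Icc 0 z.im, p.eval ⟨z.re, τ⟩ = 0 := fun τ hτ => by
    have hle : ‖p.eval ⟨z.re, τ⟩‖ ≤ ‖p.eval z‖ :=
      le_of_tendsto_of_tendsto (hlim _).norm (hlim _).norm
        (hF.mono fun t ht => ht.norm_eval_le rfl hτ.1 hτ.2)
    simpa [hroot] using hle
  refine hp (p.eq_zero_of_infinite_isRoot ?_)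
  have hinj : Function.Injective fun τ : ℝ => (⟨z.re, τ⟩ : ℂ) := fun s t h => congrArg Complex.im h
  exact ((Icc_infinite hz).image hinj.injOn).mono (image_subset_iff.2 vanish)

variable {q : ℝ[X]}

lemma im_eq_zero_of_aeval_eq_zero (hq : UpperStable (q.map (algebraMap ℝ ℂ))) {z : ℂ}
    (hz : aeval z q = 0) : z.im = 0 := by
  have no_root (w : ℂ) (hw : aeval w q = 0) : w.im ≤ 0 :=
    not_lt.1 fun h => hq w h (by rwa [eval_map_algebraMap])
  have hconj := no_root (starRingEnd ℂ z) (by rw [aeval_conj, hz, map_zero])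
  rw [Complex.conj_im] at hconj
  linarith [no_root z hz]

lemma splits (hq : UpperStable (q.map (algebraMap ℝ ℂ))) : q.Splits := by
  refine (IsAlgClosed.splits (q.map (algebraMap ℝ ℂ))).of_splits_map _ fun z hz => ?_
  have hroot : aeval z q = 0 := by
    rw [← eval_map_algebraMap]
    exact isRoot_of_mem_roots hz
  exact ⟨z.re, Complex.ext rfl (hq.im_eq_zero_of_aeval_eq_zero hroot).symm⟩

end UpperStable

lemma monotoneOn_eval_of_splits {p : ℝ[X]} (hp : p.Splits) {a : ℝ}
    (hpos : ∀ x, a ≤ x → 0 < p.eval x) : MonotoneOn (fun x => p.eval x) (Ici a) := by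
  refine monotoneOn_of_deriv_nonneg (convex_Ici a) p.continuous.continuousOn
    p.differentiable.differentiableOn fun x hx => ?_
  have hax : a ≤ x := interior_subset hx
  rw [Polynomial.deriv, hp.eval_derivative_eq_eval_mul_sum (hpos x hax).ne']
  refine mul_nonneg (hpos x hax).le (Multiset.sum_nonneg ?_)
  simp only [Multiset.mem_map, forall_exists_index, and_imp, forall_apply_eq_imp_iff₂]
  intro r hr
  have hra : r < a := not_le.1 fun h => (hpos r h).ne' (isRoot_of_mem_roots hr)
  exact one_div_nonneg.2 (by linarith)

lemma eval_pos_of_forall_ne_zero {q : ℝ[X]} {a : ℝ} (hq : ∀ᶠ x in atTop, 0 < q.eval x)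
    (hne : ∀ x, a ≤ x → q.eval x ≠ 0) : ∀ x, a ≤ x → 0 < q.eval x := by
  intro x hx
  by_contra! hneg
  obtain ⟨b, hb, hab⟩ := (hq.and (eventually_ge_atTop a)).exists
  obtain ⟨y, hy, hy0⟩ := isPreconnected_Ici.intermediate_value (mem_Ici.2 hx) (mem_Ici.2 hab)
    q.continuous.continuousOn ⟨hneg, hb.le⟩
  exact hne y hy hy0

/- Continuous induction along the segment from `p` to `q`: where the interpolant is monotone on
`[a, ∞)` it is bounded below by its positive value at `a`, so positivity, hence monotonicity,
persists for slightly larger parameters. -/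
lemma eval_pos_of_forall_splits_segment {p q : ℝ[X]} {a : ℝ} (hp : ∀ x, a ≤ x → 0 < p.eval x)
    (hqa : 0 < q.eval a) (hq : ∀ᶠ x in atTop, 0 < q.eval x)
    (hsplits : ∀ t ∈ Ico (0 : ℝ) 1, (C (1 - t) * p + C t * q).Splits) :
    ∀ x, a ≤ x → 0 < q.eval x := by
  obtain ⟨b, hb⟩ := eventually_atTop.1 hq
  set f : ℝ → ℝ → ℝ := fun t x => (1 - t) * p.eval x + t * q.eval x with hf
  have f_pos {t x : ℝ} (ht : t ∈ Icc (0 : ℝ) 1) (hx : a ≤ x) (hqx : 0 < q.eval x) : 0 < f t x := by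
    simpa using convex_Ioi (0 : ℝ) (hp x hx) hqx (sub_nonneg.2 ht.2) ht.1 (by ring)
  have f_monotone {t : ℝ} (ht : t ∈ Ico (0 : ℝ) 1) (hpos : ∀ x, a ≤ x → 0 < f t x) :
      MonotoneOn (f t) (Ici a) := by
    have := monotoneOn_eval_of_splits (hsplits t ht) (a := a) (by simpa [hf] using hpos)
    simpa [hf] using this
  let G : Set ℝ := {t | MonotoneOn (f t) (Ici a)}
  have hG : IsClosed G := isClosed_monotoneOn.preimage (by fun_prop)
  have zero_mem : (0 : ℝ) ∈ G := f_monotone (by simp) (by simpa [hf] using hp)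
  have hsub : Icc (0 : ℝ) 1 ⊆ G := by
    refine (hG.inter isClosed_Icc).Icc_subset_of_forall_mem_nhdsWithin zero_mem ?_
    rintro t ⟨ht, ht0, ht1⟩
    have ft_pos : ∀ x ∈ Icc a b, 0 < f t x := fun x hx =>
      (f_pos ⟨ht0, ht1.le⟩ le_rfl hqa).trans_le (ht self_mem_Ici hx.1 hx.1)
    have near : ∀ᶠ s in 𝓝 t, ∀ x ∈ Icc a b, 0 < f s x :=
      isCompact_Icc.eventually_forall_of_forall_eventually fun x hx =>
        (show Continuous fun z : ℝ × ℝ => f z.1 z.2 by fun_prop).continuousAt.eventually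
          (lt_mem_nhds (ft_pos x hx))
    filter_upwards [nhdsWithin_le_nhds near, self_mem_nhdsWithin,
      nhdsWithin_le_nhds (Iio_mem_nhds ht1)] with s hs hts hs1
    have hs0 : 0 ≤ s := ht0.trans (le_of_lt hts)
    refine f_monotone ⟨hs0, hs1⟩ fun x hx => ?_
    rcases le_total x b with hxb | hbx
    · exact hs x ⟨hx, hxb⟩
    · exact f_pos ⟨hs0, le_of_lt hs1⟩ hx (hb x hbx)
  intro x hx
  have hmono : MonotoneOn (f 1) (Ici a) := hsub (right_mem_Icc.2 zero_le_one)
  exact hqa.trans_le (by simpa [hf] using hmono self_mem_Ici hx hx)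

end RealRootedness

section Interlacing

open Filter Set Topology

variable {ι : Type*}

/-- The weight `μ` tilted by an external field `l`. Tilting by positive fields and letting some of
the fields tend to `0` or `∞` conditions `μ` on the corresponding elements. -/
def externalField (l : ι → ℝ) (μ : Finset ι → ℝ) (S : Finset ι) : ℝ := μ S * ∏ i ∈ S, l i

lemma externalField_one (μ : Finset ι → ℝ) : externalField 1 μ = μ := by
  ext S
  simp [externalField]

lemma externalField_nonneg {l : ι → ℝ} (hl : ∀ i, 0 < l i) {μ : Finset ι → ℝ} (hμ : 0 ≤ μ) :
    0 ≤ externalField l μ :=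
  fun S => mul_nonneg (hμ S) (Finset.prod_nonneg fun i _ => (hl i).le)

lemma externalField_ne_zero {l : ι → ℝ} (hl : ∀ i, 0 < l i) {μ : Finset ι → ℝ} (hμ : μ ≠ 0) :
    externalField l μ ≠ 0 := by
  obtain ⟨S, hS⟩ := Function.ne_iff.1 hμ
  exact Function.ne_iff.2 ⟨S, mul_ne_zero hS (Finset.prod_pos fun i _ => hl i).ne'⟩

lemma externalField_add_smul (l : ι → ℝ) (μ ν : Finset ι → ℝ) (t : ℝ) :
    externalField l (μ + t • ν) = externalField l μ + t • externalField l ν := by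
  ext S
  simp only [externalField, Pi.add_apply, Pi.smul_apply, smul_eq_mul]
  ring

lemma externalField_update [DecidableEq ι] (l : ι → ℝ) (μ : Finset ι → ℝ) (i : ι) (t : ℝ) :
    externalField (Function.update l i (t * l i)) μ =
      externalField l ({S | i ∈ S}ᶜ.indicator μ + t • {S | i ∈ S}.indicator μ) := by
  ext S
  by_cases hi : i ∈ S
  · simp only [externalField, Finset.prod_update_of_mem hi, Pi.add_apply, Pi.smul_apply,
      smul_eq_mul, Set.indicator, mem_compl_iff, mem_ofPred_eq, hi, not_true, if_false, if_true,
      ← Finset.mul_prod_erase S l hi, Finset.sdiff_singleton_eq_erase]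
    ring
  · simp [externalField, Finset.prod_update_of_notMem hi, hi]

variable [Fintype ι] {R : Finset ι → ℝ[X]} {μ ν : Finset ι → ℝ}

/-- The mixture `∑ S, μ S • R S` of a family of polynomials with weights `μ`. -/
noncomputable def mixture (R : Finset ι → ℝ[X]) : (Finset ι → ℝ) →ₗ[ℝ] ℝ[X] :=
  Fintype.linearCombination ℝ R

lemma eval_mixture (R : Finset ι → ℝ[X]) (μ : Finset ι → ℝ) (x : ℝ) :
    (mixture R μ).eval x = ∑ S, μ S * (R S).eval x := by
  simp [mixture, Fintype.linearCombination_apply, eval_finsetSum]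

lemma eventually_eval_mixture_pos (hR : ∀ S, ∀ᶠ x in atTop, 0 < (R S).eval x) (hμ : 0 ≤ μ)
    (hμ' : μ ≠ 0) : ∀ᶠ x in atTop, 0 < (mixture R μ).eval x := by
  filter_upwards [eventually_all.2 hR] with x hx
  obtain ⟨S, hS⟩ := Function.ne_iff.1 hμ'
  rw [eval_mixture]
  exact Finset.sum_pos' (fun T _ => mul_nonneg (hμ T) (hx T).le)
    ⟨S, Finset.mem_univ S, mul_pos ((hμ S).lt_of_ne' hS) (hx S)⟩

lemma mixture_ne_zero (hR : ∀ S, ∀ᶠ x in atTop, 0 < (R S).eval x) (hμ : 0 ≤ μ) (hμ' : μ ≠ 0) :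
    mixture R μ ≠ 0 := by
  obtain ⟨x, hx⟩ := (eventually_eval_mixture_pos hR hμ hμ').exists
  intro h0
  simp [h0] at hx

/-- The mixture of `R` with weights `μ` is real-rooted, and stays so under every positive external
field. -/
def RealRootedUnderFields (R : Finset ι → ℝ[X]) (μ : Finset ι → ℝ) : Prop :=
  ∀ l : ι → ℝ, (∀ i, 0 < l i) →
    UpperStable ((mixture R (externalField l μ)).map (algebraMap ℝ ℂ))

namespace RealRootedUnderFields

lemma splits (h : RealRootedUnderFields R μ) : (mixture R μ).Splits := by
  simpa only [externalField_one] using (h 1 fun _ => one_pos).splits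

lemma of_forall_add_smul (hR : ∀ S, ∀ᶠ x in atTop, 0 < (R S).eval x) (hμ : 0 ≤ μ) (hμ' : μ ≠ 0)
    (h : ∀ t : ℝ, 0 < t → RealRootedUnderFields R (μ + t • ν)) : RealRootedUnderFields R μ := by
  intro l hl
  refine UpperStable.of_tendsto (l := 𝓝[>] (0 : ℝ))
    (F := fun t => (mixture R (externalField l (μ + t • ν))).map (algebraMap ℝ ℂ))
    ((Polynomial.map_ne_zero_iff (algebraMap ℝ ℂ).injective).2
      (mixture_ne_zero hR (externalField_nonneg hl hμ) (externalField_ne_zero hl hμ')))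
    (eventually_mem_nhdsWithin.mono fun t ht => h t ht l hl) fun z => ?_
  simp only [externalField_add_smul, map_add, map_smul, Polynomial.map_add, Polynomial.map_smul,
    eval_add, eval_smul]
  exact Tendsto.mono_left (Continuous.tendsto' (by fun_prop) _ _ (by simp)) nhdsWithin_le_nhds

/- Along the segment from `μ + ν` to `μ` every mixture except possibly the last one splits. -/
lemma eval_mixture_pos_of_add (hR : ∀ S, ∀ᶠ x in atTop, 0 < (R S).eval x) (hμ : 0 ≤ μ)
    (h : ∀ t : ℝ, 0 < t → RealRootedUnderFields R (μ + t • ν)) {a : ℝ}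
    (hpos : ∀ x, a ≤ x → 0 < (mixture R (μ + ν)).eval x) (ha : 0 < (mixture R μ).eval a) :
    ∀ x, a ≤ x → 0 < (mixture R μ).eval x := by
  have hμ' : μ ≠ 0 := by
    rintro rfl
    simp at ha
  refine eval_pos_of_forall_splits_segment hpos ha (eventually_eval_mixture_pos hR hμ hμ')
    fun t ht => ?_
  convert (h (1 - t) (sub_pos.2 ht.2)).splits using 1
  simp only [map_add, map_smul, smul_eq_C_mul, C_sub, C_1]
  ring

lemma smul (h : RealRootedUnderFields R μ) {t : ℝ} (ht : t ≠ 0) :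
    RealRootedUnderFields R (t • μ) := by
  intro l hl z hz
  have hfield : externalField l (t • μ) = t • externalField l μ := by
    ext S
    simp only [externalField, Pi.smul_apply, smul_eq_mul, mul_assoc]
  simpa [hfield, ht] using h l hl z hz

lemma add_smul_symm (h : ∀ t : ℝ, 0 < t → RealRootedUnderFields R (μ + t • ν)) {t : ℝ}
    (ht : 0 < t) : RealRootedUnderFields R (ν + t • μ) := by
  convert (h t⁻¹ (inv_pos.2 ht)).smul ht.ne' using 1
  rw [smul_add, smul_inv_smul₀ ht.ne', add_comm]

lemma indicator_add_smul (h : RealRootedUnderFields R μ) (i : ι) {t : ℝ} (ht : 0 < t) :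
    RealRootedUnderFields R ({S | i ∈ S}ᶜ.indicator μ + t • {S | i ∈ S}.indicator μ) := by
  classical
  intro l hl
  rw [← externalField_update]
  refine h _ fun j => ?_
  rcases eq_or_ne j i with rfl | hj
  · simpa using mul_pos ht (hl j)
  · simpa [hj] using hl j

lemma exists_summand_eval_pos (hR : ∀ S, ∀ᶠ x in atTop, 0 < (R S).eval x) (hμ : 0 ≤ μ) (hν : 0 ≤ ν)
    (h : ∀ t : ℝ, 0 < t → RealRootedUnderFields R (μ + t • ν)) {a : ℝ}
    (hpos : ∀ x, a ≤ x → 0 < (mixture R (μ + ν)).eval x) :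
    ∃ ρ, (ρ = μ ∨ ρ = ν) ∧ RealRootedUnderFields R ρ ∧ ∀ x, a ≤ x → 0 < (mixture R ρ).eval x := by
  wlog ha : 0 < (mixture R μ).eval a generalizing μ ν
  · have hsum : 0 < (mixture R μ).eval a + (mixture R ν).eval a := by
      simpa using hpos a le_rfl
    obtain ⟨ρ, hρ, hρ'⟩ := this hν hμ (fun t => add_smul_symm h) (add_comm μ ν ▸ hpos)
      (by linarith)
    exact ⟨ρ, hρ.symm, hρ'⟩
  have hμ' : μ ≠ 0 := by
    rintro rfl
    simp at ha
  exact ⟨μ, .inl rfl, of_forall_add_smul hR hμ hμ' h, eval_mixture_pos_of_add hR hμ h hpos ha⟩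

lemma exists_eval_pos_of_agree_off (hR : ∀ S, ∀ᶠ x in atTop, 0 < (R S).eval x) {a : ℝ}
    (s : Finset ι) (hμ : 0 ≤ μ) (h : RealRootedUnderFields R μ)
    (hpos : ∀ x, a ≤ x → 0 < (mixture R μ).eval x)
    (hs : ∀ S T, μ S ≠ 0 → μ T ≠ 0 → ∀ i ∉ s, i ∈ S ↔ i ∈ T) :
    ∃ S, μ S ≠ 0 ∧ ∀ x, a ≤ x → 0 < (R S).eval x := by
  classical
  induction s using Finset.induction_on generalizing μ with
  | empty =>
    obtain ⟨S, hS⟩ : ∃ S, μ S ≠ 0 := by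
      by_contra! h0
      simpa [eval_mixture, h0] using hpos a le_rfl
    have hS' : ∀ T, T ≠ S → μ T = 0 := fun T hTS => by
      by_contra hT
      exact hTS (Finset.ext fun i => hs T S hT hS i (Finset.notMem_empty i))
    refine ⟨S, hS, fun x hx => (mul_pos_iff_of_pos_left ((hμ S).lt_of_ne' hS)).1 ?_⟩
    have hx' := hpos x hx
    rwa [eval_mixture, Fintype.sum_eq_single S fun T hT => by rw [hS' T hT, zero_mul]] at hx'
  | insert i s hi ih =>
    set A : Set (Finset ι) := {S | i ∈ S}
    obtain ⟨ρ, hρ, hρR, hρpos⟩ := exists_summand_eval_pos hR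
      (μ := Aᶜ.indicator μ) (ν := A.indicator μ)
      (indicator_nonneg fun S _ => hμ S) (indicator_nonneg fun S _ => hμ S)
      (fun t ht => h.indicator_add_smul i ht) (by rwa [indicator_compl_add_self])
    obtain ⟨B, hB, rfl⟩ : ∃ B, (B = Aᶜ ∨ B = A) ∧ ρ = B.indicator μ := by
      rcases hρ with rfl | rfl
      exacts [⟨_, .inl rfl, rfl⟩, ⟨_, .inr rfl, rfl⟩]
    have agree_at (S T) (hS : S ∈ B) (hT : T ∈ B) : i ∈ S ↔ i ∈ T := by
      rcases hB with rfl | rfl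
      · exact iff_of_false hS hT
      · exact iff_of_true hS hT
    obtain ⟨S, hS, hSpos⟩ := ih (indicator_nonneg fun S _ => hμ S) hρR hρpos
      fun S T hS hT j hj => by
      rw [indicator_apply_ne_zero] at hS hT
      rcases eq_or_ne j i with rfl | hji
      · exact agree_at S T hS.1 hT.1
      · exact hs S T hS.2 hT.2 j (by simp [hji, hj])
    exact ⟨S, (indicator_apply_ne_zero.1 hS).2, hSpos⟩

theorem exists_forall_isRoot_le (hR : ∀ S, ∀ᶠ x in atTop, 0 < (R S).eval x) (hμ : 0 ≤ μ)
    (hμ' : μ ≠ 0) (h : RealRootedUnderFields R μ) :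
    ∃ S, 0 < μ S ∧ ∀ x, (R S).IsRoot x → ∃ y, (mixture R μ).IsRoot y ∧ x ≤ y := by
  by_contra! hcon
  choose! r hr hroot using hcon
  obtain ⟨T, hT⟩ := Function.ne_iff.1 hμ'
  obtain ⟨S₀, hS₀, hmin⟩ := Set.exists_min_image {S | 0 < μ S} r (Set.toFinite _)
    ⟨T, (hμ T).lt_of_ne' hT⟩
  have hpos := eval_pos_of_forall_ne_zero (a := r S₀) (eventually_eval_mixture_pos hR hμ hμ')
    fun x hx hx0 => (hroot S₀ hS₀ x hx0).not_ge hx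
  obtain ⟨S, hS, hSpos⟩ := exists_eval_pos_of_agree_off hR Finset.univ hμ h hpos (by simp)
  have hS' : 0 < μ S := (hμ S).lt_of_ne' hS
  exact (hSpos (r S) (hmin S hS')).ne' (hr S hS')

end RealRootedUnderFields

end Interlacing

section Contraction

variable {ι : Type*}

/-- The value at `w` of the multiaffine polynomial `∑ S ⊆ s, c S * ∏ i ∈ S, w i`, as a linear
function of its coefficients `c`. -/
noncomputable def multiaffine (s : Finset ι) (w : ι → ℂ) : (Finset ι → ℂ) →ₗ[ℂ] ℂ :=
  ∑ S ∈ s.powerset, (∏ i ∈ S, w i) • LinearMap.proj S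

lemma multiaffine_apply (s : Finset ι) (w : ι → ℂ) (c : Finset ι → ℂ) :
    multiaffine s w c = ∑ S ∈ s.powerset, (∏ i ∈ S, w i) * c S := by
  simp [multiaffine]

lemma multiaffine_univ [Fintype ι] (w : ι → ℂ) (c : Finset ι → ℂ) :
    multiaffine Finset.univ w c = ∑ S, (∏ i ∈ S, w i) * c S := by
  rw [multiaffine_apply, Finset.powerset_univ]

lemma multiaffine_insert_update [DecidableEq ι] {s : Finset ι} {i : ι} (hi : i ∉ s) (w : ι → ℂ)
    (x : ℂ) (c : Finset ι → ℂ) :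
    multiaffine (insert i s) (Function.update w i x) c =
      multiaffine s w c + x * multiaffine s w (fun S => c (insert i S)) := by
  simp only [multiaffine_apply, Finset.sum_powerset_insert hi, Finset.mul_sum]
  have notMem {S : Finset ι} (hS : S ∈ s.powerset) : i ∉ S :=
    fun h => hi (Finset.mem_powerset.1 hS h)
  congr 1 <;> refine Finset.sum_congr rfl fun S hS => ?_
  · rw [Finset.prod_update_of_notMem (notMem hS)]
  · rw [Finset.prod_update_of_mem (Finset.mem_insert_self i S),
      Finset.sdiff_singleton_eq_erase, Finset.erase_insert (notMem hS), mul_assoc]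

lemma multiaffine_add_mul (s : Finset ι) (w : ι → ℂ) (c d : Finset ι → ℂ) (y : ℂ) :
    multiaffine s w (fun S => c S + y * d S) = multiaffine s w c + y * multiaffine s w d := by
  rw [← smul_eq_mul, ← map_smul, ← map_add]
  rfl

lemma exists_contraction_root {a b c : ℂ} (ha : a ≠ 0) (hbc : b = 0 ∨ c = 0) :
    ∃ x y : ℂ, x.im ≤ 0 ∧ 0 ≤ y.im ∧ a + b * x + c * y - a * x * y = 0 := by
  wlog hb : b = 0 generalizing b c
  · obtain ⟨x, y, hx, hy, h⟩ := this (b := -c) (c := -b) (by simpa using hbc.symm)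
      (by simpa using hbc.resolve_left hb)
    exact ⟨-y, -x, by simpa using hy, by simpa using hx, by linear_combination h⟩
  subst hb
  obtain ⟨t, ht, hct⟩ : ∃ t : ℝ, 0 < t ∧ (c / a).im ≤ t :=
    ⟨|(c / a).im| + 1, by positivity, by linarith [le_abs_self (c / a).im]⟩
  have htc : (t : ℂ) ≠ 0 := Complex.ofReal_ne_zero.2 ht.ne'
  refine ⟨c / a - t * Complex.I, Complex.I / t, ?_, ?_, ?_⟩
  · simpa using hct
  · simpa [Complex.div_ofReal_im] using ht.le
  · field_simp
    linear_combination a ^ 2 * t * Complex.I_sq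

/- If `d = -a`, the bilinear form reduces to `b * x + c / x` on the curve `y = 1 / x`, which has a
zero `x` in the closed lower half-plane; the degenerate cases `b = 0` and `c = 0` are treated
separately. -/
lemma contraction_scalar_ne_zero {a b c d : ℂ}
    (h : ∀ x y : ℂ, x.im ≤ 0 → 0 ≤ y.im → a + b * x + c * y + d * x * y ≠ 0) : a + d ≠ 0 := by
  intro had
  obtain rfl : d = -a := eq_neg_of_add_eq_zero_right had
  have ha : a ≠ 0 := by simpa using h 0 0
  by_cases hbc : b = 0 ∨ c = 0
  · obtain ⟨x, y, hx, hy, hxy⟩ := exists_contraction_root ha hbc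
    exact h x y hx hy (by linear_combination hxy)
  obtain ⟨hb, hc⟩ := not_or.1 hbc
  obtain ⟨x, hx2, hx⟩ : ∃ x : ℂ, x ^ 2 = -c / b ∧ x.im ≤ 0 := by
    obtain ⟨s, hs⟩ := IsAlgClosed.exists_pow_nat_eq (-c / b) two_pos
    rcases le_total s.im 0 with h0 | h0
    · exact ⟨s, hs, h0⟩
    · exact ⟨-s, by rwa [neg_sq], by simpa using h0⟩
  have hx0 : x ≠ 0 := by
    rintro rfl
    simp [hb, hc, eq_comm] at hx2
  have hinv : 0 ≤ x⁻¹.im := by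
    rw [Complex.inv_im]
    exact div_nonneg (neg_nonneg.2 hx) (Complex.normSq_nonneg x)
  refine h x x⁻¹ hx hinv ?_
  rw [eq_div_iff hb] at hx2
  field_simp
  linear_combination hx2

lemma sum_diagonal_ne_zero_of_multiaffine {s : Finset ι} {h : Finset ι → Finset ι → ℂ}
    (hh : ∀ w u : ι → ℂ, (∀ i, (w i).im ≤ 0) → (∀ i, 0 ≤ (u i).im) →
      multiaffine s w (fun S => multiaffine s u (h S)) ≠ 0) :
    ∑ S ∈ s.powerset, h S S ≠ 0 := by
  classical
  induction s using Finset.induction_on generalizing h with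
  | empty => simpa [multiaffine_apply] using hh 0 0 (by simp) (by simp)
  | insert i s hi ih =>
    rw [Finset.sum_powerset_insert hi, ← Finset.sum_add_distrib]
    refine ih (h := fun S T => h S T + h (insert i S) (insert i T)) fun w u hw hu => ?_
    let f (g : Finset ι → Finset ι → ℂ) := multiaffine s w fun S => multiaffine s u (g S)
    have hf := contraction_scalar_ne_zero (a := f h) (b := f fun S => h (insert i S))
      (c := f fun S T => h S (insert i T)) (d := f fun S T => h (insert i S) (insert i T))
      fun x y hx hy => ?_
    · convert hf using 1
      simp only [f, ← map_add]
      congr 1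
      ext S
      exact map_add (multiaffine s u) (h S) fun T => h (insert i S) (insert i T)
    · convert hh (Function.update w i x) (Function.update u i y)
        ((Function.forall_update_iff w fun _ v => v.im ≤ 0).2 ⟨hx, fun j _ => hw j⟩)
        ((Function.forall_update_iff u fun _ v => 0 ≤ v.im).2 ⟨hy, fun j _ => hu j⟩) using 1
      simp only [multiaffine_insert_update hi, multiaffine_add_mul, f]
      ring

lemma sum_mul_ne_zero_of_multiaffine [Fintype ι] {c g : Finset ι → ℂ}
    (hc : ∀ w : ι → ℂ, (∀ i, (w i).im ≤ 0) → multiaffine Finset.univ w c ≠ 0)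
    (hg : ∀ u : ι → ℂ, (∀ i, 0 ≤ (u i).im) → multiaffine Finset.univ u g ≠ 0) :
    ∑ S, c S * g S ≠ 0 := by
  rw [← Finset.powerset_univ]
  refine sum_diagonal_ne_zero_of_multiaffine (h := fun S T => c S * g T) fun w u hw hu => ?_
  convert mul_ne_zero (hc w hw) (hg u hu) using 1
  have inner (S : Finset ι) : multiaffine Finset.univ u (fun T => c S * g T) =
      multiaffine Finset.univ u g * c S := by
    rw [mul_comm, ← smul_eq_mul, ← map_smul]
    rfl
  simp only [inner]
  rw [mul_comm, ← smul_eq_mul, ← map_smul]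
  rfl

variable [Fintype ι] [DecidableEq ι]

/-- The coefficients of the multiaffine polynomial with coefficients `c` after every variable has
been translated by `ε`. -/
noncomputable def shiftCoeff (c : Finset ι → ℂ) (ε : ℂ) (S : Finset ι) : ℂ :=
  ∑ T with S ⊆ T, c T * ε ^ (T \ S).card

lemma shiftCoeff_zero (c : Finset ι → ℂ) : shiftCoeff c 0 = c := by
  ext S
  rw [shiftCoeff, Finset.sum_eq_single S]
  · simp
  · intro T hT hTS
    have hcard : (T \ S).card ≠ 0 := by
      rw [Finset.card_ne_zero, Finset.sdiff_nonempty]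
      exact fun h => hTS (h.antisymm (Finset.mem_filter.1 hT).2)
    rw [zero_pow hcard, mul_zero]
  · simp

lemma continuous_shiftCoeff (c : Finset ι → ℂ) (S : Finset ι) :
    Continuous fun ε => shiftCoeff c ε S := by
  unfold shiftCoeff
  fun_prop

lemma multiaffine_shiftCoeff (c : Finset ι → ℂ) (ε : ℂ) (w : ι → ℂ) :
    multiaffine Finset.univ w (shiftCoeff c ε) =
      multiaffine Finset.univ (fun i => w i + ε) c := by
  simp only [multiaffine_univ, shiftCoeff, Finset.prod_add, Finset.prod_const, Finset.mul_sum,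
    Finset.sum_mul]
  rw [Finset.sum_comm' (t' := Finset.univ) (s' := Finset.powerset) (by simp)]
  exact Finset.sum_congr rfl fun T _ => Finset.sum_congr rfl fun S _ => by ring

end Contraction

section Determinants

variable {ι R : Type*} [Fintype ι] [DecidableEq ι] [CommRing R]

/-- The matrix `M` with the rows indexed by `S` replaced by those of the identity matrix. Its
determinant is the principal minor of `M` on the complement of `S`. -/
def unitRows {ι R : Type*} [DecidableEq ι] [Zero R] [One R] (S : Finset ι) (M : Matrix ι ι R) :
    Matrix ι ι R :=
  of fun i => if i ∈ S then Pi.single i 1 else M i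

lemma unitRows_empty {ι R : Type*} [DecidableEq ι] [Zero R] [One R] (M : Matrix ι ι R) :
    unitRows ∅ M = M := by
  ext i j
  simp [unitRows]

lemma unitRows_insert {ι R : Type*} [DecidableEq ι] [Zero R] [One R] (i : ι) (S : Finset ι)
    (M : Matrix ι ι R) :
    unitRows (insert i S) M = (unitRows S M).updateRow i (Pi.single i 1) := by
  ext k j
  rcases eq_or_ne k i with rfl | hk
  · simp [unitRows]
  · simp [unitRows, hk]

lemma det_unitRows (S : Finset ι) (M : Matrix ι ι R) :
    (unitRows S M).det =
      (M.submatrix (Subtype.val : ↥Sᶜ → ι) (Subtype.val : ↥Sᶜ → ι)).det := by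
  let e : {i : ι // i ∉ S} ≃ ↥Sᶜ := Equiv.subtypeEquivRight fun i => Finset.mem_compl.symm
  rw [twoBlockTriangular_det _ (· ∉ S), ← det_submatrix_equiv_self e]
  · have unit_block : toSquareBlockProp (unitRows S M) (¬ · ∉ S) = 1 := by
      ext ⟨i, hi⟩ ⟨j, hj⟩
      simp [toSquareBlockProp, unitRows, not_not.1 hi, one_apply, Pi.single_apply, @eq_comm _ j]
    have minor_block : toSquareBlockProp (unitRows S M) (· ∉ S) =
        (M.submatrix (Subtype.val : ↥Sᶜ → ι) (Subtype.val : ↥Sᶜ → ι)).submatrix e e := by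
      ext ⟨i, hi⟩ ⟨j, hj⟩
      simp [toSquareBlockProp, unitRows, hi, e]
    rw [unit_block, minor_block, det_one, mul_one]
  · intro i hi j hj
    have hij : j ≠ i := fun h => hj (h ▸ not_not.1 hi)
    simp [unitRows, not_not.1 hi, hij]

lemma det_diagonal_add (u : ι → R) (M : Matrix ι ι R) :
    (diagonal u + M).det = ∑ S, (∏ i ∈ S, u i) * (unitRows S M).det := by
  let f := (detRowAlternating (n := ι) (R := R)).toMultilinearMap
  refine (f.map_add_univ (diagonal u).row M.row).trans (Finset.sum_congr rfl fun S _ => ?_)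
  rw [← smul_eq_mul]
  refine .trans (congrArg f ?_) (f.map_piecewise_smul u (unitRows S M).row S)
  ext i j
  by_cases hi : i ∈ S <;>
    simp [unitRows, hi, diagonal_apply, Pi.single_apply, @eq_comm _ j]

lemma derivation_prod {k A κ : Type*} [CommSemiring k] [CommSemiring A] [Algebra k A]
    [DecidableEq κ] (D : Derivation k A A) (s : Finset κ) (f : κ → A) :
    D (∏ i ∈ s, f i) = ∑ i ∈ s, D (f i) * ∏ j ∈ s.erase i, f j := by
  induction s using Finset.induction_on with
  | empty => simp
  | insert i s hi ih =>
    rw [Finset.prod_insert hi, D.leibniz, ih, Finset.sum_insert hi, Finset.erase_insert hi,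
      add_comm, smul_eq_mul, smul_eq_mul, mul_comm, Finset.mul_sum]
    congr 1
    refine Finset.sum_congr rfl fun j hj => ?_
    have hij : i ≠ j := fun h => hi (h ▸ hj)
    rw [Finset.erase_insert_of_ne hij, Finset.prod_insert fun h => hi (Finset.mem_of_mem_erase h)]
    ring

lemma derivation_det {k : Type*} [CommSemiring k] [Algebra k R] (D : Derivation k R R)
    (M : Matrix ι ι R) : D M.det = ∑ i, (M.updateRow i fun j => D (M i j)).det := by
  have det_updateRow (i : ι) : (M.updateRow i fun j => D (M i j)).det =
      ∑ σ : Equiv.Perm ι, σ.sign • (D (M i (σ i)) * ∏ j ∈ Finset.univ.erase i, M j (σ j)) := by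
    rw [← det_transpose, det_apply]
    refine Finset.sum_congr rfl fun σ _ => ?_
    rw [← Finset.mul_prod_erase _ _ (Finset.mem_univ i), transpose_apply, updateRow_self]
    congr 2
    refine Finset.prod_congr rfl fun j hj => ?_
    rw [transpose_apply, updateRow_ne (Finset.ne_of_mem_erase hj)]
  simp only [det_updateRow]
  rw [← det_transpose, det_apply, map_sum, Finset.sum_comm]
  refine Finset.sum_congr rfl fun σ _ => ?_
  simp only [transpose_apply, Units.smul_def, map_zsmul, derivation_prod, Finset.smul_sum]

lemma det_diagonal_sub_ne_zero {A : Matrix ι ι ℂ} (hA : A.IsHermitian) {d : ι → ℂ}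
    (hd : ∀ i, 0 < (d i).im) : (diagonal d - A).det ≠ 0 := by
  intro h0
  obtain ⟨v, hv, hv0⟩ := exists_mulVec_eq_zero_iff.2 h0
  have form_eq : star v ⬝ᵥ (diagonal d *ᵥ v) = star v ⬝ᵥ (A *ᵥ v) := by
    rw [← sub_eq_zero, ← dotProduct_sub, ← sub_mulVec, hv0, dotProduct_zero]
  have form_im : ∑ i, (d i).im * Complex.normSq (v i) = 0 := by
    have him : (star v ⬝ᵥ (A *ᵥ v)).im = 0 := by simpa using hA.im_star_dotProduct_mulVec_self v
    rw [← him, ← form_eq]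
    simp only [dotProduct, mulVec_diagonal, Complex.im_sum]
    refine Finset.sum_congr rfl fun i _ => ?_
    simp only [Pi.star_apply, Complex.star_def, Complex.mul_im, Complex.mul_re, Complex.conj_re,
      Complex.conj_im, Complex.normSq_apply]
    ring
  refine hv (funext fun i => ?_)
  have term_zero := (Finset.sum_eq_zero_iff_of_nonneg fun i _ =>
    mul_nonneg (hd i).le (Complex.normSq_nonneg (v i))).1 form_im i (Finset.mem_univ i)
  simpa [(hd i).ne'] using term_zero

end Determinants

section HermitianCharpoly

open Filter

variable {ι : Type*} [Fintype ι] [DecidableEq ι] {B : Matrix ι ι ℂ}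

/-- The characteristic polynomial of a Hermitian matrix as a real polynomial, built from the
eigenvalues. -/
noncomputable def realCharpoly (hB : B.IsHermitian) : ℝ[X] := ∏ i, (X - C (hB.eigenvalues i))

lemma map_realCharpoly (hB : B.IsHermitian) :
    (realCharpoly hB).map (algebraMap ℝ ℂ) = B.charpoly := by
  rw [hB.charpoly_eq, realCharpoly, Polynomial.map_prod]
  simp

lemma eventually_eval_realCharpoly_pos (hB : B.IsHermitian) :
    ∀ᶠ x in atTop, 0 < (realCharpoly hB).eval x := by
  filter_upwards [eventually_all.2 fun i => eventually_gt_atTop (hB.eigenvalues i)] with x hx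
  rw [realCharpoly, eval_prod]
  exact Finset.prod_pos fun i _ => by simpa using hx i

lemma exists_isRoot_realCharpoly (hB : B.IsHermitian) {x : ℂ} (hx : B.charpoly.IsRoot x) :
    ∃ r : ℝ, (r : ℂ) = x ∧ (realCharpoly hB).IsRoot r := by
  rw [hB.charpoly_eq, IsRoot.def, eval_prod, Finset.prod_eq_zero_iff] at hx
  obtain ⟨i, hi, hxi⟩ := hx
  refine ⟨hB.eigenvalues i, ?_, ?_⟩
  · exact (sub_eq_zero.1 (by simpa using hxi)).symm
  · rw [realCharpoly, IsRoot.def, eval_prod]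
    exact Finset.prod_eq_zero hi (by simp)

end HermitianCharpoly

section ExpectedCharpoly

open Filter Topology

variable {n : ℕ}

lemma pderiv_det_unitRows_ZsubA (A : Matrix (Fin n) (Fin n) ℂ) {T : Finset (Fin n)} {i : Fin n}
    (hi : i ∉ T) : MvPolynomial.pderiv i (unitRows T (ZsubA A)).det =
      (unitRows (insert i T) (ZsubA A)).det := by
  rw [derivation_det, Fintype.sum_eq_single i, unitRows_insert]
  · congr 2
    ext j : 1
    rcases eq_or_ne j i with rfl | hj
    · simp [unitRows, ZsubA, hi]
    · simp [unitRows, ZsubA, hi, hj, hj.symm]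
  · intro k hk
    refine det_eq_zero_of_row_eq_zero k fun j => ?_
    rcases eq_or_ne k j with rfl | hkj
    · by_cases hkT : k ∈ T <;> simp [unitRows, ZsubA, hkT, MvPolynomial.pderiv_X_of_ne hk]
    · by_cases hkT : k ∈ T <;> simp [unitRows, ZsubA, hkT, hkj, hkj.symm]

lemma prod_map_pd_det_ZsubA (A : Matrix (Fin n) (Fin n) ℂ) {l : List (Fin n)} (hl : l.Nodup) :
    (l.map pd).prod (ZsubA A).det = (unitRows l.toFinset (ZsubA A)).det := by
  induction l with
  | nil => simp [unitRows_empty]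
  | cons i l ih =>
    rw [List.nodup_cons] at hl
    rw [List.map_cons, List.prod_cons, Module.End.mul_apply, ih hl.2, List.toFinset_cons]
    exact pderiv_det_unitRows_ZsubA A (mt List.mem_toFinset.1 hl.1)

lemma aeval_pdS_det_ZsubA (A : Matrix (Fin n) (Fin n) ℂ) (S : Finset (Fin n)) :
    MvPolynomial.aeval (fun _ : Fin n => (X : ℂ[X])) (pdS S (ZsubA A).det) =
      (subAway A S).charpoly := by
  rw [pdS, prod_map_pd_det_ZsubA A (Finset.sort_nodup _ _), Finset.sort_toFinset, det_unitRows,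
    AlgHom.map_det, charpoly]
  congr 1
  ext i j : 2
  rcases eq_or_ne i j with rfl | hij
  · simp [ZsubA, subAway, algebraMap_eq]
  · simp [ZsubA, subAway, hij, Subtype.coe_injective.ne hij, algebraMap_eq]

lemma expCharpoly_eq_aeval (μ : Finset (Fin n) → ℝ) (A : Matrix (Fin n) (Fin n) ℂ) :
    expCharpoly μ A = MvPolynomial.aeval (fun _ : Fin n => (X : ℂ[X]))
      (∑ S, (μ S : ℂ) • pdS S (ZsubA A).det) := by
  simp only [expCharpoly, map_sum, map_smul, aeval_pdS_det_ZsubA, smul_eq_C_mul]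

lemma eval_charpoly_subAway (A : Matrix (Fin n) (Fin n) ℂ) (S : Finset (Fin n)) (z : ℂ) :
    (subAway A S).charpoly.eval z = (unitRows S (diagonal (fun _ => z) - A)).det := by
  rw [eval_charpoly, det_unitRows]
  congr 1
  ext i j
  rcases eq_or_ne i j with rfl | hij
  · simp [subAway]
  · simp [subAway, hij, Subtype.coe_injective.ne hij]

/-- The generating polynomial `∑ S, μ S * ∏ i ∈ S, z i` of the weights `μ`. -/
noncomputable def generatingPoly (μ : Finset (Fin n) → ℝ) : MvPolynomial (Fin n) ℝ :=
  ∑ S, MvPolynomial.C (μ S) * ∏ i ∈ S, MvPolynomial.X i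

variable {μ : Finset (Fin n) → ℝ} {A : Matrix (Fin n) (Fin n) ℂ}

lemma aeval_generatingPoly (μ : Finset (Fin n) → ℝ) (z : Fin n → ℂ) :
    MvPolynomial.aeval z (generatingPoly μ) =
      multiaffine Finset.univ z (fun S => (μ S : ℂ)) := by
  simp [generatingPoly, multiaffine_univ, mul_comm]

namespace RealStable

lemma aeval_ne_zero_of_im_neg {p : MvPolynomial (Fin n) ℝ} (hp : RealStable p) {z : Fin n → ℂ}
    (hz : ∀ k, (z k).im < 0) : MvPolynomial.aeval z p ≠ 0 := by
  intro h0
  refine hp (fun k => Complex.conjAe.toAlgHom (z k)) (by simpa using hz) ?_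
  rw [← MvPolynomial.comp_aeval_apply, h0, map_zero]

lemma generatingPoly_externalField (hμ : RealStable (generatingPoly μ)) {l : Fin n → ℝ}
    (hl : ∀ i, 0 < l i) : RealStable (generatingPoly (externalField l μ)) := by
  intro z hz
  convert hμ (fun i => l i * z i) fun i => by simpa using mul_pos (hl i) (hz i) using 1
  simp only [aeval_generatingPoly, multiaffine_univ, externalField, Finset.prod_mul_distrib,
    Complex.ofReal_mul, Complex.ofReal_prod]
  exact Finset.sum_congr rfl fun S _ => by ring

lemma sum_shiftCoeff_mul_ne_zero (hμ : RealStable (generatingPoly μ)) (hA : A.IsHermitian)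
    {δ : ℝ} (hδ : 0 < δ) {z : ℂ} (hz : 0 < z.im) :
    ∑ S, shiftCoeff (fun S => (μ S : ℂ)) (-(δ * Complex.I)) S * (subAway A S).charpoly.eval z ≠
      0 := by
  refine sum_mul_ne_zero_of_multiaffine (fun w hw => ?_) fun u hu => ?_
  · rw [multiaffine_shiftCoeff, ← aeval_generatingPoly]
    refine hμ.aeval_ne_zero_of_im_neg fun k => ?_
    simpa using (hw k).trans_lt hδ
  · simp only [multiaffine_univ, eval_charpoly_subAway]
    rw [← det_diagonal_add, ← add_sub_assoc, diagonal_add]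
    exact det_diagonal_sub_ne_zero hA fun i => add_pos_of_nonneg_of_pos (hu i) hz

end RealStable

lemma isHermitian_subAway (hA : A.IsHermitian) (S : Finset (Fin n)) : (subAway A S).IsHermitian :=
  hA.submatrix _

lemma expCharpoly_eq_map_mixture (μ : Finset (Fin n) → ℝ) (hA : A.IsHermitian) :
    expCharpoly μ A = (mixture (fun S => realCharpoly (isHermitian_subAway hA S)) μ).map
      (algebraMap ℝ ℂ) := by
  simp [expCharpoly, mixture, Fintype.linearCombination_apply, Polynomial.map_sum,
    smul_eq_C_mul, map_realCharpoly]

lemma expCharpoly_ne_zero (hμ : 0 ≤ μ) (hμ' : μ ≠ 0) (hA : A.IsHermitian) :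
    expCharpoly μ A ≠ 0 := by
  rw [expCharpoly_eq_map_mixture μ hA, Ne, Polynomial.map_eq_zero]
  exact mixture_ne_zero (fun S => eventually_eval_realCharpoly_pos (isHermitian_subAway hA S))
    hμ hμ'

lemma RealStable.upperStable_expCharpoly (h : RealStable (generatingPoly μ)) (hμ : 0 ≤ μ)
    (hμ' : μ ≠ 0) (hA : A.IsHermitian) : UpperStable (expCharpoly μ A) := by
  refine UpperStable.of_tendsto (l := 𝓝[>] (0 : ℝ))
    (F := fun δ => ∑ S, C (shiftCoeff (fun S => (μ S : ℂ)) (-(δ * Complex.I)) S) *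
      (subAway A S).charpoly)
    (expCharpoly_ne_zero hμ hμ' hA) ?_ fun z => ?_
  · filter_upwards [self_mem_nhdsWithin] with δ hδ z hz
    simpa [eval_finsetSum] using h.sum_shiftCoeff_mul_ne_zero hA hδ hz
  · simp only [expCharpoly, eval_finsetSum, eval_mul, eval_C]
    refine Tendsto.mono_left (tendsto_finsetSum _ fun S _ => ?_) nhdsWithin_le_nhds
    refine Tendsto.mul_const _ (((continuous_shiftCoeff _ S).comp
      (by fun_prop : Continuous fun δ : ℝ => -(δ * Complex.I))).tendsto' 0 _ ?_)
    simp [shiftCoeff_zero]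

lemma RealStable.realRootedUnderFields (h : RealStable (generatingPoly μ)) (hμ : 0 ≤ μ)
    (hμ' : μ ≠ 0) (hA : A.IsHermitian) :
    RealRootedUnderFields (fun S => realCharpoly (isHermitian_subAway hA S)) μ := by
  intro l hl
  rw [← expCharpoly_eq_map_mixture _ hA]
  exact (h.generatingPoly_externalField hl).upperStable_expCharpoly (externalField_nonneg hl hμ)
    (externalField_ne_zero hl hμ') hA

theorem RealStable.im_eq_zero_of_isRoot_expCharpoly (h : RealStable (generatingPoly μ))
    (hμ : 0 ≤ μ) (hμ' : μ ≠ 0) (hA : A.IsHermitian) {z : ℂ} (hz : (expCharpoly μ A).IsRoot z) :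
    z.im = 0 := by
  have hstable := h.upperStable_expCharpoly hμ hμ' hA
  rw [expCharpoly_eq_map_mixture μ hA] at hstable hz
  exact hstable.im_eq_zero_of_aeval_eq_zero (by rwa [← eval_map_algebraMap])

theorem RealStable.exists_forall_isRoot_re_le (h : RealStable (generatingPoly μ)) (hμ : 0 ≤ μ)
    (hμ' : μ ≠ 0) (hA : A.IsHermitian) :
    ∃ S, 0 < μ S ∧ ∀ x, (subAway A S).charpoly.IsRoot x →
      ∃ y, (expCharpoly μ A).IsRoot y ∧ x.re ≤ y.re := by
  obtain ⟨S, hS, hroots⟩ := (h.realRootedUnderFields hμ hμ' hA).exists_forall_isRoot_le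
    (fun S => eventually_eval_realCharpoly_pos (isHermitian_subAway hA S)) hμ hμ'
  refine ⟨S, hS, fun x hx => ?_⟩
  obtain ⟨r, rfl, hr⟩ := exists_isRoot_realCharpoly (isHermitian_subAway hA S) hx
  obtain ⟨y, hy, hry⟩ := hroots r hr
  rw [expCharpoly_eq_map_mixture μ hA]
  exact ⟨y, hy.map, hry⟩

end ExpectedCharpoly

/-- For a strongly Rayleigh distribution `μ` on subsets of `{1,…,n}` and a Hermitian `A`:
(i) the expected characteristic polynomial `q = Σ_S μ(S) χ[A_S]` is real rooted;
(ii) `q = P_μ(∂_{z₁},…,∂_{z_n}) det(Z-A)` with all variables then set equal to `x`;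
(iii) if `q` is nonconstant, some `S` with `μ(S) > 0` has all roots of `χ[A_S]` at most
the largest root of `q`. -/
theorem strongly_rayleigh_expected_charpoly {n : ℕ} (μ : Finset (Fin n) → ℝ)
    (hμ0 : ∀ S, 0 ≤ μ S) (hμ1 : ∑ S : Finset (Fin n), μ S = 1)
    (hSR : RealStable (∑ S : Finset (Fin n), MvPolynomial.C (μ S) * ∏ i ∈ S, MvPolynomial.X i))
    (A : Matrix (Fin n) (Fin n) ℂ) (hA : A.IsHermitian) :
    (∀ z : ℂ, (expCharpoly μ A).IsRoot z → z.im = 0) ∧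
    (expCharpoly μ A
      = MvPolynomial.aeval (fun _ : Fin n => (Polynomial.X : Polynomial ℂ))
          (∑ S : Finset (Fin n), ((μ S : ℂ)) • (pdS S (ZsubA A).det))) ∧
    (0 < (expCharpoly μ A).natDegree →
      ∃ S : Finset (Fin n), 0 < μ S ∧ ∀ x : ℂ, (subAway A S).charpoly.IsRoot x →
        ∃ y : ℂ, (expCharpoly μ A).IsRoot y ∧ x.re ≤ y.re) := by
  have hμ : μ ≠ 0 := by
    rintro rfl
    simp at hμ1
  exact ⟨fun z hz => RealStable.im_eq_zero_of_isRoot_expCharpoly hSR hμ0 hμ hA hz,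
    expCharpoly_eq_aeval μ A, fun _ => RealStable.exists_forall_isRoot_re_le hSR hμ0 hμ hA⟩
end
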